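/- Let j₀ ∈ ℚ. Suppose there exists R such that every elliptic curve E over ℚ with j-invariant equal to j₀ satisfies rank E(ℚ) ≤ R. Then there exists an integer N₀, depending only on j₀, such that for every elliptic curve E over ℚ with j-invariant equal to j₀, every sequence of affine points of E(ℚ) whose x-coordinates form a non-trivial arithmetic progression, or whose y-coordinates form a non-trivial arithmetic progression, has length at most N₀. -/

import Mathlib

open scoped TensorProduct

/-- The rank of an abelian group `G`, i.e. `dim_ℚ (G ⊗_ℤ ℚ)`. -/
noncomputable def grpRank (G : Type*) [AddCommGroup G] : ℕ :=
  Module.finrank ℚ (ℚ ⊗[ℤ] G)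

/-- `u 0, …, u (N-1)` is a non-trivial arithmetic progression. -/
def IsNontrivAP {F : Type*} [Field F] {N : ℕ} (u : Fin N → F) : Prop :=
  ∃ a b : F, b ≠ 0 ∧ ∀ i : Fin N, u i = a + (((i : ℕ) + 1 : ℕ) : F) * b

/-! ### Short Weierstrass coordinates on a general Weierstrass curve -/

namespace APB

section Coords

variable {F : Type*} [Field F] [CharZero F]

/-- The coefficient `A` of the short Weierstrass model. -/
def cA (W : WeierstrassCurve F) : F := -W.c₄ / 48

/-- The coefficient `B` of the short Weierstrass model. -/
def cB (W : WeierstrassCurve F) : F := -W.c₆ / 864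

/-- The `X`-coordinate in the short Weierstrass model (`0` at infinity). -/
def pX {W : WeierstrassCurve F} : W.toAffine.Point → F
  | .zero => 0
  | .some x _ _ => x + W.b₂ / 12

/-- The `Y`-coordinate in the short Weierstrass model (`0` at infinity). -/
def pY {W : WeierstrassCurve F} : W.toAffine.Point → F
  | .zero => 0
  | .some x y _ => y + (W.a₁ * x + W.a₃) / 2

variable {W : WeierstrassCurve F}

lemma disc_eq (W : WeierstrassCurve F) : W.Δ = -16 * (4 * cA W ^ 3 + 27 * cB W ^ 2) := by
  simp only [cA, cB, WeierstrassCurve.c₄, WeierstrassCurve.c₆, WeierstrassCurve.Δ,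
    WeierstrassCurve.b₂, WeierstrassCurve.b₄, WeierstrassCurve.b₆, WeierstrassCurve.b₈]
  ring

lemma pt_cases (P : W.toAffine.Point) (hP : P ≠ 0) :
    ∃ x y, ∃ h : W.toAffine.Nonsingular x y, P = .some x y h := by
  rcases P with _ | ⟨x, y, h⟩
  · exact absurd rfl hP
  · exact ⟨x, y, h, rfl⟩

lemma p_eqn {P : W.toAffine.Point} (hP : P ≠ 0) :
    pY P ^ 2 = pX P ^ 3 + cA W * pX P + cB W := by
  obtain ⟨x, y, h, rfl⟩ := pt_cases P hP
  have h1 := (WeierstrassCurve.Affine.equation_iff ..).mp h.1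
  simp only [pX, pY, cA, cB, WeierstrassCurve.c₄, WeierstrassCurve.c₆,
    WeierstrassCurve.b₂, WeierstrassCurve.b₄, WeierstrassCurve.b₆]
  linear_combination h1

lemma p_ext {P Q : W.toAffine.Point} (hP : P ≠ 0) (hQ : Q ≠ 0) (hx : pX P = pX Q)
    (hy : pY P = pY Q) : P = Q := by
  obtain ⟨x, y, h, rfl⟩ := pt_cases P hP
  obtain ⟨x', y', h', rfl⟩ := pt_cases Q hQ
  simp only [pX, pY] at hx hy
  have : x = x' := by linear_combination hx
  subst this
  have : y = y' := by linear_combination hy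
  subst this
  rfl

lemma neg_ne {P : W.toAffine.Point} (hP : P ≠ 0) : -P ≠ 0 := by
  obtain ⟨x, y, h, rfl⟩ := pt_cases P hP
  rw [WeierstrassCurve.Affine.Point.neg_some]
  exact WeierstrassCurve.Affine.Point.some_ne_zero _

lemma pX_neg (P : W.toAffine.Point) : pX (-P) = pX P := by
  rcases P with _ | ⟨x, y, h⟩
  · rfl
  · rw [WeierstrassCurve.Affine.Point.neg_some]; rfl

lemma pY_neg (P : W.toAffine.Point) : pY (-P) = -pY P := by
  rcases P with _ | ⟨x, y, h⟩
  · change (0 : F) = - 0; simp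
  · rw [WeierstrassCurve.Affine.Point.neg_some]
    simp only [pY, WeierstrassCurve.Affine.negY]
    ring

lemma p_ext_or {P Q : W.toAffine.Point} (hP : P ≠ 0) (hQ : Q ≠ 0) (hx : pX P = pX Q) :
    P = Q ∨ P = -Q := by
  have h1 := p_eqn hP
  have h2 := p_eqn hQ
  rw [hx, ← h2] at h1
  rcases sq_eq_sq_iff_eq_or_eq_neg.mp h1 with h | h
  · exact Or.inl (p_ext hP hQ hx h)
  · exact Or.inr (p_ext hP (neg_ne hQ) (by rw [pX_neg, hx]) (by rw [pY_neg, h]))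

variable [DecidableEq F]

lemma p_add {P Q : W.toAffine.Point} (hP : P ≠ 0) (hQ : Q ≠ 0) (hx : pX P ≠ pX Q) :
    P + Q ≠ 0 ∧ pX (P + Q) = ((pY P - pY Q) / (pX P - pX Q)) ^ 2 - pX P - pX Q ∧
    pY (P + Q) = -((pY P - pY Q) / (pX P - pX Q) * (pX (P + Q) - pX P) + pY P) := by
  obtain ⟨x, y, h, rfl⟩ := pt_cases P hP
  obtain ⟨x', y', h', rfl⟩ := pt_cases Q hQ
  have hne : x ≠ x' := fun e => hx (by subst e; rfl)
  have hd : x - x' ≠ 0 := sub_ne_zero.mpr hne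
  rw [WeierstrassCurve.Affine.Point.add_of_X_ne hne]
  refine ⟨WeierstrassCurve.Affine.Point.some_ne_zero _, ?_, ?_⟩ <;>
  simp only [pX, pY, WeierstrassCurve.Affine.addX, WeierstrassCurve.Affine.addY,
    WeierstrassCurve.Affine.negAddY, WeierstrassCurve.Affine.negY,
    WeierstrassCurve.Affine.slope_of_X_ne hne, add_sub_add_right_eq_sub, WeierstrassCurve.b₂] <;>
  field_simp <;> ring

lemma p_double {P : W.toAffine.Point} (hP : P ≠ 0) (hy : pY P ≠ 0) :
    P + P ≠ 0 ∧ pX (P + P) = ((3 * pX P ^ 2 + cA W) / (2 * pY P)) ^ 2 - 2 * pX P ∧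
    pY (P + P) = -((3 * pX P ^ 2 + cA W) / (2 * pY P) * (pX (P + P) - pX P) + pY P) := by
  obtain ⟨x, y, h, rfl⟩ := pt_cases P hP
  have hne : y ≠ W.toAffine.negY x y := by
    intro e
    apply hy
    simp only [pY]
    rw [WeierstrassCurve.Affine.negY] at e
    linear_combination (1 / 2 : F) * e
  rw [WeierstrassCurve.Affine.Point.add_self_of_Y_ne hne]
  have hs : W.toAffine.slope x x y y =
      (3 * (x + W.b₂ / 12) ^ 2 + cA W) / (2 * (y + (W.a₁ * x + W.a₃) / 2)) - W.a₁ / 2 := by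
    rw [WeierstrassCurve.Affine.slope_of_Y_ne rfl hne]
    simp only [pY] at hy
    have e1 : y - W.toAffine.negY x y = 2 * (y + (W.a₁ * x + W.a₃) / 2) := by
      rw [WeierstrassCurve.Affine.negY]; ring
    rw [e1]
    have h2 : 2 * (y + (W.a₁ * x + W.a₃) / 2) ≠ 0 := mul_ne_zero two_ne_zero hy
    rw [eq_sub_iff_add_eq, div_add' _ _ _ h2, div_left_inj' h2]
    simp only [cA, WeierstrassCurve.c₄, WeierstrassCurve.b₂, WeierstrassCurve.b₄]
    ring
  refine ⟨WeierstrassCurve.Affine.Point.some_ne_zero _, ?_, ?_⟩ <;>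
  simp only [pX, pY, WeierstrassCurve.Affine.addX, WeierstrassCurve.Affine.addY,
    WeierstrassCurve.Affine.negAddY, WeierstrassCurve.Affine.negY, hs] <;>
  generalize (3 * (x + W.b₂ / 12) ^ 2 + cA W) / (2 * (y + (W.a₁ * x + W.a₃) / 2)) = s <;>
  simp only [WeierstrassCurve.b₂] <;> ring

lemma p_double_zero {P : W.toAffine.Point} (hy : pY P = 0) : P + P = 0 := by
  by_cases hP : P = 0
  · simp [hP]
  have : P = -P := p_ext hP (neg_ne hP) (pX_neg P).symm (by rw [pY_neg, hy, neg_zero])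
  nth_rewrite 2 [this]
  exact add_neg_cancel P

lemma p_exists [W.IsElliptic] {X Y : F} (h : Y ^ 2 = X ^ 3 + cA W * X + cB W) :
    ∃ P : W.toAffine.Point, P ≠ 0 ∧ pX P = X ∧ pY P = Y := by
  have he : W.toAffine.Equation (X - W.b₂ / 12)
      (Y - (W.a₁ * (X - W.b₂ / 12) + W.a₃) / 2) := by
    rw [WeierstrassCurve.Affine.equation_iff]
    simp only [cA, cB, WeierstrassCurve.c₄, WeierstrassCurve.c₆,
      WeierstrassCurve.b₂, WeierstrassCurve.b₄, WeierstrassCurve.b₆] at h ⊢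
    linear_combination h
  have hn := WeierstrassCurve.Affine.equation_iff_nonsingular.mp he
  exact ⟨.some _ _ hn, WeierstrassCurve.Affine.Point.some_ne_zero _, by simp [pX], by simp [pY]⟩

end Coords

end APB

namespace APB

/-! ### Canonical heights from approximate parallelogram laws -/

lemma exists_canonical {G : Type*} [AddCommGroup G] (h : G → ℝ) (C : ℝ)
    (hpar : ∀ x y, |h (x + y) + h (x - y) - 2 * (h x + h y)| ≤ C) (hpos : ∀ x, 0 ≤ h x) :
    ∃ q : G → ℝ, (∀ x y, q (x + y) + q (x - y) = 2 * (q x + q y)) ∧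
      (∀ x, |q x - h x| ≤ C) ∧ ∀ x, 0 ≤ q x := by
  have hC : 0 ≤ C := le_trans (abs_nonneg _) (hpar 0 0)
  have h0 : |h 0| ≤ C / 2 := by
    have := hpar 0 0
    simp only [add_zero, sub_zero] at this
    rw [abs_le] at this ⊢
    constructor <;> linarith
  have hdouble : ∀ x, |h (x + x) - 4 * h x| ≤ 3 * C / 2 := by
    intro x
    have := hpar x x
    rw [sub_self] at this
    rw [abs_le] at this h0 ⊢
    constructor <;> linarith
  let u : G → ℕ → ℝ := fun x n => h ((2 ^ n : ℕ) • x) / 4 ^ n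
  have hu : ∀ x n, dist (u x n) (u x (n + 1)) ≤ (3 * C / 8) * (1 / 4) ^ n := by
    intro x n
    have e : (2 ^ (n + 1) : ℕ) • x = (2 ^ n : ℕ) • x + (2 ^ n : ℕ) • x := by
      rw [pow_succ, mul_two, add_smul]
    have := hdouble ((2 ^ n : ℕ) • x)
    simp only [u]
    rw [e, dist_comm, Real.dist_eq]
    have e2 : h ((2 ^ n : ℕ) • x + (2 ^ n : ℕ) • x) / 4 ^ (n + 1) - h ((2 ^ n : ℕ) • x) / 4 ^ n
        = (h ((2 ^ n : ℕ) • x + (2 ^ n : ℕ) • x) - 4 * h ((2 ^ n : ℕ) • x)) / 4 ^ (n + 1) := by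
      rw [pow_succ]; field_simp
    rw [e2, abs_div, abs_of_pos (by positivity : (0 : ℝ) < 4 ^ (n + 1)),
      div_le_iff₀ (by positivity)]
    have e3 : 3 * C / 8 * (1 / 4) ^ n * 4 ^ (n + 1) = 3 * C / 2 := by
      rw [pow_succ, one_div, inv_pow]; field_simp; ring
    rw [e3]; exact this
  have hlim : ∀ x, ∃ a, Filter.Tendsto (u x) Filter.atTop (nhds a) := fun x =>
    cauchySeq_tendsto_of_complete (cauchySeq_of_le_geometric (1 / 4) (3 * C / 8) (by norm_num) (hu x))
  choose q hq using hlim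
  refine ⟨q, ?_, ?_, ?_⟩
  · intro x y
    have t1 : Filter.Tendsto (fun n => u (x + y) n + u (x - y) n - 2 * (u x n + u y n))
        Filter.atTop (nhds (q (x + y) + q (x - y) - 2 * (q x + q y))) :=
      ((hq _).add (hq _)).sub (((hq _).add (hq _)).const_mul 2)
    have t2 : Filter.Tendsto (fun n => u (x + y) n + u (x - y) n - 2 * (u x n + u y n))
        Filter.atTop (nhds 0) := by
      refine squeeze_zero_norm (a := fun n : ℕ => C * (1 / 4) ^ n) ?_ ?_
      · intro n
        have := hpar ((2 ^ n : ℕ) • x) ((2 ^ n : ℕ) • y)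
        rw [← smul_add, ← smul_sub] at this
        simp only [u, Real.norm_eq_abs]
        have e : h ((2 ^ n : ℕ) • (x + y)) / 4 ^ n + h ((2 ^ n : ℕ) • (x - y)) / 4 ^ n
          - 2 * (h ((2 ^ n : ℕ) • x) / 4 ^ n + h ((2 ^ n : ℕ) • y) / 4 ^ n) =
          (h ((2 ^ n : ℕ) • (x + y)) + h ((2 ^ n : ℕ) • (x - y))
            - 2 * (h ((2 ^ n : ℕ) • x) + h ((2 ^ n : ℕ) • y))) / 4 ^ n := by ring
        rw [e, abs_div, abs_of_pos (by positivity : (0 : ℝ) < 4 ^ n), one_div, inv_pow,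
          ← div_eq_mul_inv]
        gcongr
      · have := (tendsto_pow_atTop_nhds_zero_of_lt_one (r := (1 / 4 : ℝ)) (by norm_num)
          (by norm_num)).const_mul C
        simpa using this
    have := tendsto_nhds_unique t1 t2
    linarith
  · intro x
    have := dist_le_of_le_geometric_of_tendsto₀ (1 / 4) (3 * C / 8) (by norm_num) (hu x) (hq x)
    simp only [u, pow_zero, one_smul, div_one] at this
    rw [dist_comm, Real.dist_eq] at this
    refine this.trans ?_
    rw [div_le_iff₀ (by norm_num)]
    linarith
  · intro x
    refine ge_of_tendsto' (hq x) fun n => ?_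
    exact div_nonneg (hpos _) (by positivity)

/-- The bilinear form attached to a function satisfying the parallelogram law. -/
lemma exists_bilin {G : Type*} [AddCommGroup G] (q : G → ℝ)
    (hq : ∀ x y, q (x + y) + q (x - y) = 2 * (q x + q y)) :
    ∃ b : G → G →ₗ[ℤ] ℝ, (∀ x y, b x y = b y x) ∧ ∀ x, b x x = 2 * q x := by
  have q0 : q 0 = 0 := by
    have := hq 0 0
    simp only [add_zero, sub_zero] at this
    linarith
  have key : ∀ x y z, q (x + (y + z)) = q (x + y) + q (x + z) + q (y + z) - q x - q y - q z := by
    intro x y z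
    have h1 := hq (x + y) z
    have h2 := hq x (y - z)
    have h3 := hq (x + z) y
    have h4 := hq y z
    rw [show x + y + z = x + (y + z) by abel] at h1
    rw [show x + (y - z) = x + y - z by abel, show x - (y - z) = x + z - y by abel] at h2
    rw [show x + z + y = x + (y + z) by abel] at h3
    linarith
  refine ⟨fun x => AddMonoidHom.toIntLinearMap
    { toFun := fun y => q (x + y) - q x - q y
      map_zero' := by simp [q0]
      map_add' := fun y z => by rw [key]; ring }, ?_, ?_⟩
  · intro x y
    simp only [AddMonoidHom.coe_toIntLinearMap, AddMonoidHom.coe_mk, ZeroHom.coe_mk]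
    rw [add_comm]; ring
  · intro x
    have := hq x x
    rw [sub_self, q0] at this
    simp only [AddMonoidHom.coe_toIntLinearMap, AddMonoidHom.coe_mk, ZeroHom.coe_mk]
    linarith

open scoped TensorProduct

lemma exists_embedding {G : Type*} [AddCommGroup G] [FiniteDimensional ℚ (ℚ ⊗[ℤ] G)]
    (h : G → ℝ) (C : ℝ)
    (hpar : ∀ x y, |h (x + y) + h (x - y) - 2 * (h x + h y)| ≤ C) (hpos : ∀ x, 0 ≤ h x) :
    ∃ Φ : G →+ (Fin (grpRank G) → ℝ), ∀ g, |(∑ i, Φ g i ^ 2) - h g| ≤ C := by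
  obtain ⟨q, hq, hqh, hqpos⟩ := exists_canonical h C hpar hpos
  obtain ⟨b, bsymm, bself⟩ := exists_bilin q hq
  -- a basis consisting of pure tensors
  have hspan : Submodule.span ℚ (Set.range fun g : G => (1 : ℚ) ⊗ₜ[ℤ] g) = ⊤ := by
    rw [eq_top_iff]
    rintro x -
    induction x using TensorProduct.induction_on with
    | zero => exact Submodule.zero_mem _
    | tmul a g =>
      have : a ⊗ₜ[ℤ] g = a • ((1 : ℚ) ⊗ₜ[ℤ] g) := by
        rw [TensorProduct.smul_tmul', smul_eq_mul, mul_one]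
      rw [this]
      exact Submodule.smul_mem _ _ (Submodule.subset_span ⟨g, rfl⟩)
    | add x y hx hy => exact Submodule.add_mem _ hx hy
  obtain ⟨s, hs, hsb⟩ : ∃ s : Fin (grpRank G) → G, True ∧
      ∃ B : Module.Basis (Fin (grpRank G)) ℚ (ℚ ⊗[ℤ] G), ∀ i, B i = (1 : ℚ) ⊗ₜ[ℤ] s i := by
    let B0 := Module.Basis.ofSpan hspan.ge
    have hfin : Fintype (((linearIndepOn_empty ℚ id).extend (Set.empty_subset
      (Set.range fun g : G => (1 : ℚ) ⊗ₜ[ℤ] g)))) := FiniteDimensional.fintypeBasisIndex B0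
    have hcard := Module.finrank_eq_card_basis B0
    let e := Fintype.equivFinOfCardEq hcard.symm
    have hmem : ∀ i, ∃ g : G, (B0.reindex e) i = (1 : ℚ) ⊗ₜ[ℤ] g := by
      intro i
      have := Module.Basis.ofSpan_subset hspan.ge (Set.mem_range_self (e.symm i))
      obtain ⟨g, hg⟩ := this
      exact ⟨g, by simp only [Module.Basis.reindex_apply]; exact hg.symm⟩
    choose s hs using hmem
    exact ⟨s, trivial, B0.reindex e, hs⟩
  obtain ⟨B, hB⟩ := hsb
  let c : G → Fin (grpRank G) → ℚ := fun g i => B.repr ((1 : ℚ) ⊗ₜ[ℤ] g) i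
  have hc : ∀ g x, b x g = ∑ i, (c g i : ℝ) * b x (s i) := by
    intro g x
    let β := (TensorProduct.isBaseChange ℤ G ℚ).lift (b x)
    have hβ : ∀ g, β ((1 : ℚ) ⊗ₜ[ℤ] g) = b x g := fun g =>
      (TensorProduct.isBaseChange ℤ G ℚ).lift_eq (b x) g
    rw [← hβ, ← B.sum_repr ((1 : ℚ) ⊗ₜ[ℤ] g), map_sum]
    refine Finset.sum_congr rfl fun i _ => ?_
    rw [map_smul, hB, hβ, Rat.smul_def]
  let M : Matrix (Fin (grpRank G)) (Fin (grpRank G)) ℝ := fun i j => b (s i) (s j)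
  have hM : ∀ g, 2 * q g = ∑ i, ∑ j, (c g i : ℝ) * (c g j : ℝ) * M i j := by
    intro g
    rw [← bself, hc g g]
    refine Finset.sum_congr rfl fun i _ => ?_
    rw [bsymm, hc g (s i), Finset.mul_sum]
    exact Finset.sum_congr rfl fun j _ => by rw [mul_assoc]
  have hquad : ∀ v : Fin (grpRank G) → ℤ, 0 ≤ ∑ i, ∑ j, (v i : ℝ) * (v j : ℝ) * M i j := by
    intro v
    have := hM (∑ i, v i • s i)
    have hcv : ∀ i, c (∑ i, v i • s i) i = v i := by
      intro i
      have : (1 : ℚ) ⊗ₜ[ℤ] (∑ i, v i • s i) = ∑ i, (v i : ℚ) • B i := by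
        rw [TensorProduct.tmul_sum]
        refine Finset.sum_congr rfl fun i _ => ?_
        rw [hB, TensorProduct.tmul_smul, Int.cast_smul_eq_zsmul]
      simp only [c]
      rw [this, B.repr_sum_self]
    simp only [hcv, Rat.cast_intCast] at this
    rw [← this]
    have := hqpos (∑ i, v i • s i)
    linarith
  have hreal : ∀ v : Fin (grpRank G) → ℝ, 0 ≤ ∑ i, ∑ j, v i * v j * M i j := by
    intro v
    have hcont : Filter.Tendsto (fun n : ℕ => ∑ i, ∑ j, ((⌊(n : ℝ) * v i⌋ : ℝ) / n) *
        ((⌊(n : ℝ) * v j⌋ : ℝ) / n) * M i j) Filter.atTop (nhds (∑ i, ∑ j, v i * v j * M i j)) := by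
      have hv : ∀ i, Filter.Tendsto (fun n : ℕ => (⌊(n : ℝ) * v i⌋ : ℝ) / n) Filter.atTop
          (nhds (v i)) := by
        intro i
        refine tendsto_iff_dist_tendsto_zero.mpr ?_
        refine squeeze_zero' (g := fun n : ℕ => 1 / (n : ℝ)) (Filter.Eventually.of_forall fun n => dist_nonneg) ?_ tendsto_one_div_atTop_nhds_zero_nat
        filter_upwards [Filter.eventually_gt_atTop 0] with n hn
        have hn' : (0 : ℝ) < n := by exact_mod_cast hn
        have h1 := Int.floor_le ((n : ℝ) * v i)
        have h2 := (Int.lt_floor_add_one ((n : ℝ) * v i)).le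
        have e : (⌊(n : ℝ) * v i⌋ : ℝ) / n - v i = (⌊(n : ℝ) * v i⌋ - n * v i) / n := by
          field_simp
        rw [Real.dist_eq, e, abs_div, abs_of_pos hn']
        gcongr
        rw [abs_le]; constructor <;> linarith
      exact tendsto_finsetSum _ fun i _ => tendsto_finsetSum _ fun j _ =>
        ((hv i).mul (hv j)).mul_const _
    refine ge_of_tendsto' hcont fun n => ?_
    have := hquad fun i => ⌊(n : ℝ) * v i⌋
    have e : ∑ i, ∑ j, ((⌊(n : ℝ) * v i⌋ : ℝ) / n) * ((⌊(n : ℝ) * v j⌋ : ℝ) / n) * M i j =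
      (∑ i, ∑ j, (⌊(n : ℝ) * v i⌋ : ℝ) * (⌊(n : ℝ) * v j⌋ : ℝ) * M i j) * ((n : ℝ)⁻¹ * (n : ℝ)⁻¹) := by
      simp only [Finset.sum_mul]
      exact Finset.sum_congr rfl fun i _ => Finset.sum_congr rfl fun j _ => by ring
    rw [e]
    exact mul_nonneg this (by positivity)
  have hpsd : M.PosSemidef := by
    refine Matrix.PosSemidef.of_dotProduct_mulVec_nonneg ?_ ?_
    · ext i j
      exact bsymm _ _
    · intro v
      have := hreal v
      have e : star v ⬝ᵥ M.mulVec v = ∑ i, ∑ j, v i * v j * M i j := by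
        simp only [dotProduct, Matrix.mulVec, Finset.mul_sum, star_trivial]
        exact Finset.sum_congr rfl fun i _ => Finset.sum_congr rfl fun j _ => by ring
      rw [e]; exact this
  obtain ⟨N, hN⟩ : ∃ N : Matrix (Fin (grpRank G)) (Fin (grpRank G)) ℝ, M = N.conjTranspose * N := by

    open scoped MatrixOrder in
    exact CStarAlgebra.nonneg_iff_eq_star_mul_self.mp hpsd.nonneg
  have hMN : ∀ i j, M i j = ∑ k, N k i * N k j := by
    intro i j
    rw [hN]
    simp [Matrix.mul_apply]
  refine ⟨{ toFun := fun g k => (∑ i, N k i * (c g i : ℝ)) / Real.sqrt 2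
            map_zero' := ?_
            map_add' := ?_ }, ?_⟩
  · ext k; simp [c]
  · intro x y
    ext k
    simp only [c, TensorProduct.tmul_add, map_add, Finsupp.coe_add, Pi.add_apply, Rat.cast_add,
      mul_add, Finset.sum_add_distrib, add_div]
  · intro g
    have : ∑ k, ((∑ i, N k i * (c g i : ℝ)) / Real.sqrt 2) ^ 2 = q g := by
      have h2 : q g = (∑ i, ∑ j, (c g i : ℝ) * (c g j : ℝ) * M i j) / 2 := by
        rw [← hM]; ring
      rw [h2]
      simp only [div_pow, Real.sq_sqrt (show (0 : ℝ) ≤ 2 by norm_num)]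
      rw [← Finset.sum_div]
      congr 1
      simp only [hMN, sq, Finset.mul_sum]
      rw [Finset.sum_comm' (t' := Finset.univ) (s' := fun _ => Finset.univ) (by simp)]
      refine Finset.sum_congr rfl fun i _ => ?_
      rw [Finset.sum_comm]
      refine Finset.sum_congr rfl fun k _ => ?_
      rw [Finset.sum_mul]
      refine Finset.sum_congr rfl fun j _ => ?_
      ring
    simp only [AddMonoidHom.coe_mk, ZeroHom.coe_mk, this]
    exact hqh g

end APB

namespace APB

open scoped TensorProduct

lemma packing {G : Type*} [AddCommGroup G] [FiniteDimensional ℚ (ℚ ⊗[ℤ] G)]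
    (h : G → ℝ) (C : ℝ)
    (hpar : ∀ x y, |h (x + y) + h (x - y) - 2 * (h x + h y)| ≤ C) (hpos : ∀ x, 0 ≤ h x)
    (R : ℕ) (hR : grpRank G ≤ R) (s : Finset G) (D : ℝ) (hD : 0 < D) (hs : ∀ g ∈ s, h g + C ≤ D)
    (k m : ℕ) (hk : 0 < k) (hcard : m * (2 * k + 1) ^ R < s.card) :
    ∃ t ⊆ s, m < t.card ∧ ∀ g ∈ t, ∀ g' ∈ t, h (g - g') ≤ R * D / k ^ 2 + C := by
  classical
  obtain ⟨r, hR, Φ, hΦ⟩ : ∃ r ≤ R, ∃ Φ : G →+ (Fin r → ℝ), ∀ g, |(∑ i, Φ g i ^ 2) - h g| ≤ C :=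
    ⟨_, hR, exists_embedding h C hpar hpos⟩
  have hk' : (0 : ℝ) < k := by exact_mod_cast hk
  set ρ := Real.sqrt D with hρ
  have hρ0 : 0 < ρ := Real.sqrt_pos.mpr hD
  have hρ2 : ρ ^ 2 = D := Real.sq_sqrt hD.le
  let f : G → Fin r → ℤ := fun g i => ⌊Φ g i * k / ρ⌋
  have hbound : ∀ g ∈ s, ∀ i, |Φ g i| ≤ ρ := by
    intro g hg i
    apply Real.le_sqrt_of_sq_le
    have h1 : Φ g i ^ 2 ≤ ∑ i, Φ g i ^ 2 :=
      Finset.single_le_sum (f := fun i => Φ g i ^ 2) (fun i _ => sq_nonneg _) (Finset.mem_univ i)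
    have h2 := (abs_le.mp (hΦ g)).2
    have h3 := hs g hg
    rw [sq_abs]
    linarith
  have hmap : ∀ g ∈ s, f g ∈ Fintype.piFinset fun _ : Fin r => Finset.Icc (-(k : ℤ)) k := by
    intro g hg
    rw [Fintype.mem_piFinset]
    intro i
    have h1 := abs_le.mp (hbound g hg i)
    rw [Finset.mem_Icc]
    constructor
    · apply Int.le_floor.mpr
      rw [le_div_iff₀ hρ0]
      push_cast
      nlinarith
    · have : (⌊Φ g i * k / ρ⌋ : ℝ) ≤ k := by
        refine (Int.floor_le _).trans ?_
        rw [div_le_iff₀ hρ0]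
        nlinarith
      exact_mod_cast this
  have hc : (Fintype.piFinset fun _ : Fin r => Finset.Icc (-(k : ℤ)) k).card * m < s.card := by
    rw [Fintype.card_piFinset]
    simp only [Int.card_Icc, Finset.prod_const, Finset.card_univ, Fintype.card_fin]
    refine lt_of_le_of_lt ?_ hcard
    rw [mul_comm]
    have : ((k : ℤ) + 1 - -(k : ℤ)).toNat = 2 * k + 1 := by omega
    rw [this]
    exact Nat.mul_le_mul_left _ (Nat.pow_le_pow_right (by omega) hR)
  obtain ⟨y, _, hy⟩ := Finset.exists_lt_card_fiber_of_mul_lt_card_of_maps_to hmap hc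
  refine ⟨_, Finset.filter_subset _ _, hy, ?_⟩
  intro g hg g' hg'
  rw [Finset.mem_filter] at hg hg'
  have hi : ∀ i, Φ (g - g') i ^ 2 ≤ D / k ^ 2 := by
    intro i
    have e : ⌊Φ g i * k / ρ⌋ = ⌊Φ g' i * k / ρ⌋ := by
      have h1 := congrFun hg.2 i
      have h2 := congrFun hg'.2 i
      simp only [f] at h1 h2
      rw [h1, h2]
    have := (Int.abs_sub_lt_one_of_floor_eq_floor e).le
    have e2 : Φ g i * k / ρ - Φ g' i * k / ρ = Φ (g - g') i * k / ρ := by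
      rw [map_sub, Pi.sub_apply]; ring
    rw [e2] at this
    have h3 : (Φ (g - g') i * k / ρ) ^ 2 ≤ 1 := (sq_le_one_iff_abs_le_one _).mpr this
    rw [div_pow, hρ2, mul_pow, div_le_one hD] at h3
    rw [le_div_iff₀ (by positivity)]
    exact h3
  have h1 : ∑ i, Φ (g - g') i ^ 2 ≤ R * D / k ^ 2 := by
    refine (Finset.sum_le_sum fun i _ => hi i).trans ?_
    rw [Finset.sum_const, Finset.card_univ, Fintype.card_fin, nsmul_eq_mul, mul_div_assoc]
    gcongr
  have h2 := (abs_le.mp (hΦ (g - g'))).1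
  linarith

end APB

/-! ### Local estimates in normed fields -/

namespace APB

section Local

variable {L : Type*} [NormedField L]

/-- `Bd M a n` : the element `a` has norm at most `M ^ n`. -/
def Bd (M : ℝ) (a : L) (n : ℕ) : Prop := ‖a‖ ≤ M ^ n

/-- The quasi-triangle inequality with constant `M`. -/
def QT (L : Type*) [NormedField L] (M : ℝ) : Prop :=
  1 ≤ M ∧ ∀ a b : L, ‖a + b‖ ≤ M * max ‖a‖ ‖b‖

variable {M : ℝ}

lemma Bd.mono (hM : QT L M) {a : L} {m n : ℕ} (h : Bd M a m) (hmn : m ≤ n) : Bd M a n :=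
  le_trans h (pow_le_pow_right₀ hM.1 hmn)

lemma Bd.add (hM : QT L M) {a b : L} {m n : ℕ} (ha : Bd M a m) (hb : Bd M b n) :
    Bd M (a + b) (max m n + 1) := by
  unfold Bd
  refine (hM.2 a b).trans ?_
  rw [pow_succ, mul_comm]
  have := zero_le_one.trans hM.1
  gcongr
  exact max_le (ha.mono hM (le_max_left _ _)) (hb.mono hM (le_max_right _ _))

lemma Bd.neg {a : L} {m : ℕ} (ha : Bd M a m) : Bd M (-a) m := by
  unfold Bd; rw [norm_neg]; exact ha

lemma Bd.sub (hM : QT L M) {a b : L} {m n : ℕ} (ha : Bd M a m) (hb : Bd M b n) :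
    Bd M (a - b) (max m n + 1) := by
  rw [sub_eq_add_neg]; exact ha.add hM hb.neg

lemma Bd.mul (hM : QT L M) {a b : L} {m n : ℕ} (ha : Bd M a m) (hb : Bd M b n) :
    Bd M (a * b) (m + n) := by
  unfold Bd at *
  have := zero_le_one.trans hM.1
  rw [norm_mul, pow_add]; gcongr

lemma Bd.pow {a : L} {m : ℕ} (ha : Bd M a m) (k : ℕ) : Bd M (a ^ k) (m * k) := by
  unfold Bd at *
  rw [norm_pow, pow_mul]; gcongr

lemma Bd.one : Bd M (1 : L) 0 := by unfold Bd; simp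
lemma Bd.zero : Bd M (0 : L) 0 := by unfold Bd; simp

lemma Bd.two (hM : QT L M) : Bd M (2 : L) 1 := by
  rw [← one_add_one_eq_two]; exact Bd.one.add hM Bd.one
lemma Bd.three (hM : QT L M) : Bd M (3 : L) 2 := by
  rw [show (3 : L) = 2 + 1 by norm_num]; exact (Bd.two hM).add hM Bd.one
lemma Bd.four (hM : QT L M) : Bd M (4 : L) 2 := by
  rw [show (4 : L) = 2 ^ 2 by norm_num]; exact (Bd.two hM).pow 2
lemma Bd.five (hM : QT L M) : Bd M (5 : L) 3 := by
  rw [show (5 : L) = 4 + 1 by norm_num]; exact (Bd.four hM).add hM Bd.one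
lemma Bd.eight (hM : QT L M) : Bd M (8 : L) 3 := by
  rw [show (8 : L) = 2 ^ 3 by norm_num]; exact (Bd.two hM).pow 3
lemma Bd.twelve (hM : QT L M) : Bd M (12 : L) 4 := by
  rw [show (12 : L) = 3 * 4 by norm_num]; exact (Bd.three hM).mul hM (Bd.four hM)
lemma Bd.thirteen (hM : QT L M) : Bd M (13 : L) 5 := by
  rw [show (13 : L) = 12 + 1 by norm_num]; exact (Bd.twelve hM).add hM Bd.one
lemma Bd.sixteen (hM : QT L M) : Bd M (16 : L) 4 := by
  rw [show (16 : L) = 4 ^ 2 by norm_num]; exact (Bd.four hM).pow 2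
lemma Bd.twentytwo (hM : QT L M) : Bd M (22 : L) 6 := by
  rw [show (22 : L) = 2 * (8 + 3) by norm_num]
  exact ((Bd.two hM).mul hM ((Bd.eight hM).add hM (Bd.three hM))).mono hM (by decide)
lemma Bd.twentyseven (hM : QT L M) : Bd M (27 : L) 6 := by
  rw [show (27 : L) = 3 ^ 3 by norm_num]; exact (Bd.three hM).pow 3
lemma Bd.thirtytwo (hM : QT L M) : Bd M (32 : L) 5 := by
  rw [show (32 : L) = 2 ^ 5 by norm_num]; exact (Bd.two hM).pow 5
lemma Bd.ninetysix (hM : QT L M) : Bd M (96 : L) 7 := by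
  rw [show (96 : L) = 3 * 32 by norm_num]; exact (Bd.three hM).mul hM (Bd.thirtytwo hM)

lemma Bd.of_sq (hM : QT L M) {a : L} {m : ℕ} (h : Bd M (a ^ 2) (2 * m)) : Bd M a m := by
  unfold Bd at *
  rw [norm_pow, mul_comm, pow_mul] at h
  exact le_of_sq_le_sq h (pow_nonneg (zero_le_one.trans hM.1) _)

/-- `1 + z` is invertible with bounded inverse if `z` is small. -/
lemma inv_near (hM : QT L M) {z : L} (hz : M * ‖z‖ < 1) : 1 + z ≠ 0 ∧ Bd M (1 + z)⁻¹ 1 := by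
  have h1 := hM.2 (1 + z) (-z)
  rw [add_neg_cancel_right, norm_one, norm_neg] at h1
  have hM0 : 0 < M := zero_lt_one.trans_le hM.1
  have h2 : 1 ≤ M * ‖1 + z‖ := by
    rcases max_cases ‖1 + z‖ ‖z‖ with ⟨h, _⟩ | ⟨h, _⟩
    · rwa [h] at h1
    · rw [h] at h1; linarith
  have h3 : 0 < ‖1 + z‖ := by
    by_contra h
    have : ‖1 + z‖ = 0 := le_antisymm (not_lt.mp h) (norm_nonneg _)
    rw [this] at h2; linarith
  refine ⟨norm_pos_iff.mp h3, ?_⟩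
  unfold Bd
  rw [norm_inv, pow_one, inv_le_comm₀ h3 hM0, inv_le_iff_one_le_mul₀' hM0]
  exact h2

lemma max_mul_max_le (hM : QT L M) (x y : L) :
    max 1 ‖x‖ * max 1 ‖y‖ ≤ M * max 1 (max ‖x + y‖ ‖x * y‖) := by
  have hM0 : 0 ≤ M := zero_le_one.trans hM.1
  have aux : ∀ x y : L, ‖x‖ ≤ 1 → max 1 ‖x‖ * max 1 ‖y‖ ≤ M * max 1 (max ‖x + y‖ ‖x * y‖) := by
    intro x y hx
    rw [max_eq_left hx, one_mul]
    refine max_le ?_ ?_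
    · have : 1 ≤ max 1 (max ‖x + y‖ ‖x * y‖) := le_max_left _ _
      nlinarith [hM.1]
    · have h1 := hM.2 (x + y) (-x)
      rw [norm_neg, show x + y + -x = y by ring] at h1
      refine h1.trans (mul_le_mul_of_nonneg_left ?_ hM0)
      exact max_le ((le_max_left _ _).trans (le_max_right _ _)) (hx.trans (le_max_left _ _))
  rcases le_total ‖x‖ 1 with hx | hx
  · exact aux x y hx
  rcases le_total ‖y‖ 1 with hy | hy
  · have := aux y x hy
    rw [mul_comm, add_comm, mul_comm x y]; exact this
  · rw [max_eq_right hx, max_eq_right hy, ← norm_mul]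
    have h1 : ‖x * y‖ ≤ max 1 (max ‖x + y‖ ‖x * y‖) := (le_max_right _ _).trans (le_max_right _ _)
    nlinarith [hM.1, norm_nonneg (x * y)]

/-- Normalised projective coordinates. -/
lemma exists_proj (x : L) : ∃ p q : L, q ≠ 0 ∧ p = x * q ∧ ‖p‖ ≤ 1 ∧ ‖q‖ ≤ 1 ∧
    (p = 1 ∨ q = 1) ∧ ‖q‖ * max 1 ‖x‖ = 1 := by
  rcases le_total ‖x‖ 1 with h | h
  · exact ⟨x, 1, one_ne_zero, by ring, h, by simp, Or.inr rfl, by simp [h]⟩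
  · have hx : x ≠ 0 := by rintro rfl; simp at h; linarith
    refine ⟨1, x⁻¹, inv_ne_zero hx, by field_simp, by simp, ?_, Or.inl rfl, ?_⟩
    · rw [norm_inv]; exact inv_le_one_of_one_le₀ h
    · rw [max_eq_right h, norm_inv, inv_mul_cancel₀ (norm_ne_zero_iff.mpr hx)]

/-- The basic local upper estimate for the parallelogram law. -/
lemma local_par (hM : QT L M) {A B x1 x2 x3 x4 : L} (hA : Bd M A 1) (hB : Bd M B 1)
    (h1 : (x3 + x4) * (x1 - x2) ^ 2 = 2 * (x1 * x2 + A) * (x1 + x2) + 4 * B)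
    (h0 : x3 * x4 * (x1 - x2) ^ 2 = (x1 * x2 - A) ^ 2 - 4 * B * (x1 + x2)) :
    max 1 ‖x3‖ * max 1 ‖x4‖ * ‖x1 - x2‖ ^ 2 ≤ M ^ 20 * (max 1 ‖x1‖ ^ 2 * max 1 ‖x2‖ ^ 2) := by
  obtain ⟨p1, q1, hq1, rfl, hp1n, hq1n, -, e1⟩ := exists_proj x1
  obtain ⟨p2, q2, hq2, rfl, hp2n, hq2n, -, e2⟩ := exists_proj x2
  have bp1 : Bd M (x1 * q1) 0 := by simpa [Bd] using hp1n
  have bp2 : Bd M (x2 * q2) 0 := by simpa [Bd] using hp2n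
  have bq1 : Bd M q1 0 := by simpa [Bd] using hq1n
  have bq2 : Bd M q2 0 := by simpa [Bd] using hq2n
  have b2 := Bd.two (L := L) hM
  have b4 := Bd.four (L := L) hM
  have k2 : Bd M (((x1 * q1) * q2 - (x2 * q2) * q1) ^ 2) 19 := by
    apply Bd.mono hM
    focus
      repeat' first
        | assumption | apply Bd.add hM | apply Bd.sub hM | apply Bd.mul hM | apply Bd.pow
    decide
  have k1 : Bd M (2 * ((x1 * q1) * (x2 * q2) + A * q1 * q2) * ((x1 * q1) * q2 + (x2 * q2) * q1)
      + 4 * B * q1 ^ 2 * q2 ^ 2) 19 := by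
    apply Bd.mono hM
    focus
      repeat' first
        | assumption | apply Bd.add hM | apply Bd.sub hM | apply Bd.mul hM | apply Bd.pow
    decide
  have k0 : Bd M (((x1 * q1) * (x2 * q2) - A * q1 * q2) ^ 2 -
      4 * B * q1 * q2 * ((x1 * q1) * q2 + (x2 * q2) * q1)) 19 := by
    apply Bd.mono hM
    focus
      repeat' first
        | assumption | apply Bd.add hM | apply Bd.sub hM | apply Bd.mul hM | apply Bd.pow
    decide
  have f2 : ((x1 * q1) * q2 - (x2 * q2) * q1) ^ 2 = (x1 - x2) ^ 2 * (q1 * q2) ^ 2 := by ring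
  have f1 : 2 * ((x1 * q1) * (x2 * q2) + A * q1 * q2) * ((x1 * q1) * q2 + (x2 * q2) * q1)
      + 4 * B * q1 ^ 2 * q2 ^ 2 = (x3 + x4) * ((x1 - x2) ^ 2 * (q1 * q2) ^ 2) := by
    linear_combination -(q1 * q2) ^ 2 * h1
  have f0 : ((x1 * q1) * (x2 * q2) - A * q1 * q2) ^ 2 -
      4 * B * q1 * q2 * ((x1 * q1) * q2 + (x2 * q2) * q1) =
      (x3 * x4) * ((x1 - x2) ^ 2 * (q1 * q2) ^ 2) := by
    linear_combination -(q1 * q2) ^ 2 * h0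
  rw [f2] at k2
  rw [f1] at k1
  rw [f0] at k0
  unfold Bd at k0 k1 k2
  rw [norm_mul] at k0 k1
  set n2 := ‖(x1 - x2) ^ 2 * (q1 * q2) ^ 2‖ with hn2
  have hn2' : n2 * (max 1 ‖x1‖ ^ 2 * max 1 ‖x2‖ ^ 2) = ‖x1 - x2‖ ^ 2 := by
    rw [hn2, norm_mul, norm_pow, norm_pow, norm_mul]
    calc _ = ‖x1 - x2‖ ^ 2 * (‖q1‖ * max 1 ‖x1‖) ^ 2 * (‖q2‖ * max 1 ‖x2‖) ^ 2 := by ring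
      _ = _ := by rw [e1, e2]; ring
  have hmain : max 1 ‖x3‖ * max 1 ‖x4‖ * n2 ≤ M ^ 20 := by
    have hn0 : 0 ≤ n2 := norm_nonneg _
    have hM0 : 0 ≤ M := zero_le_one.trans hM.1
    calc _ ≤ (M * max 1 (max ‖x3 + x4‖ ‖x3 * x4‖)) * n2 := by
            exact mul_le_mul_of_nonneg_right (max_mul_max_le hM _ _) hn0
      _ = M * (max 1 (max ‖x3 + x4‖ ‖x3 * x4‖) * n2) := by ring
      _ ≤ M * M ^ 19 := by
          gcongr
          rw [max_mul_of_nonneg _ _ hn0, max_mul_of_nonneg _ _ hn0, one_mul]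
          exact max_le k2 (max_le k1 k0)
      _ = M ^ 20 := by ring
  rw [← hn2', ← mul_assoc]
  gcongr

/-- The local two-sided estimate for doubling. -/
lemma local_double (hM : QT L M) {A B x x' : L} (hA : Bd M A 1) (hB : Bd M B 1)
    (hD : 1 ≤ M ^ 10 * ‖4 * (4 * A ^ 3 + 27 * B ^ 2)‖)
    (h1 : x' * (4 * (x ^ 3 + A * x + B)) = x ^ 4 - 2 * A * x ^ 2 - 8 * B * x + A ^ 2) :
    max 1 ‖x'‖ * ‖4 * (x ^ 3 + A * x + B)‖ ≤ M ^ 50 * max 1 ‖x‖ ^ 4 ∧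
    max 1 ‖x‖ ^ 4 ≤ M ^ 50 * (max 1 ‖x'‖ * ‖4 * (x ^ 3 + A * x + B)‖) := by
  obtain ⟨p, q, hq, hp, hpn, hqn, h11, e1⟩ := exists_proj x
  have bp : Bd M p 0 := by simpa [Bd] using hpn
  have bq : Bd M q 0 := by simpa [Bd] using hqn
  have b2 := Bd.two (L := L) hM
  have b3 := Bd.three (L := L) hM
  have b4 := Bd.four (L := L) hM
  have b5 := Bd.five (L := L) hM
  have b8 := Bd.eight (L := L) hM
  have b12 := Bd.twelve (L := L) hM
  have b13 := Bd.thirteen (L := L) hM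
  have b16 := Bd.sixteen (L := L) hM
  have b22 := Bd.twentytwo (L := L) hM
  have b27 := Bd.twentyseven (L := L) hM
  have b32 := Bd.thirtytwo (L := L) hM
  have b96 := Bd.ninetysix (L := L) hM
  set F := p ^ 4 - 2 * A * p ^ 2 * q ^ 2 - 8 * B * p * q ^ 3 + A ^ 2 * q ^ 4 with hF
  set G := 4 * q * (p ^ 3 + A * p * q ^ 2 + B * q ^ 3) with hG
  have bF : Bd M F 50 := by
    apply Bd.mono hM
    focus
      repeat' first
        | assumption | apply Bd.add hM | apply Bd.sub hM | apply Bd.mul hM | apply Bd.pow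
    decide
  have bG : Bd M G 50 := by
    apply Bd.mono hM
    focus
      repeat' first
        | assumption | apply Bd.add hM | apply Bd.sub hM | apply Bd.mul hM | apply Bd.pow
    decide
  have hGq : G = 4 * (x ^ 3 + A * x + B) * q ^ 4 := by rw [hG, hp]; ring
  have hFG : F = x' * G := by
    rw [hGq, hF, hp]; linear_combination -q ^ 4 * h1
  have hGn : ‖G‖ * max 1 ‖x‖ ^ 4 = ‖4 * (x ^ 3 + A * x + B)‖ := by
    rw [hGq, norm_mul, norm_pow]
    calc _ = ‖4 * (x ^ 3 + A * x + B)‖ * (‖q‖ * max 1 ‖x‖) ^ 4 := by ring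
      _ = _ := by rw [e1]; ring
  have hmax : max 1 ‖x'‖ * ‖G‖ = max ‖G‖ ‖F‖ := by
    rw [max_mul_of_nonneg _ _ (norm_nonneg _), one_mul, hFG, norm_mul x' G]
  have hM0 : 0 ≤ M := zero_le_one.trans hM.1
  constructor
  · rw [← hGn, ← mul_assoc, hmax]
    gcongr
    exact max_le bG bF
  have hlow : 1 ≤ M ^ 50 * max ‖G‖ ‖F‖ := by
    have key : ∀ u v : L, Bd M u 39 → Bd M v 39 →
        u * F + v * G = 4 * (4 * A ^ 3 + 27 * B ^ 2) → 1 ≤ M ^ 50 * max ‖G‖ ‖F‖ := by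
      intro u v hu hv huv
      have := hM.2 (u * F) (v * G)
      rw [huv, norm_mul u, norm_mul v] at this
      have h2 : max (‖u‖ * ‖F‖) (‖v‖ * ‖G‖) ≤ M ^ 39 * max ‖G‖ ‖F‖ := by
        refine max_le ?_ ?_
        · exact mul_le_mul hu (le_max_right _ _) (norm_nonneg _) (by positivity)
        · exact mul_le_mul hv (le_max_left _ _) (norm_nonneg _) (by positivity)
      calc 1 ≤ M ^ 10 * ‖4 * (4 * A ^ 3 + 27 * B ^ 2)‖ := hD
        _ ≤ M ^ 10 * (M * (M ^ 39 * max ‖G‖ ‖F‖)) := by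
            gcongr
            exact this.trans (mul_le_mul_of_nonneg_left h2 hM0)
        _ = _ := by ring
    rcases h11 with h11 | h11
    · refine key (4 * (4 * A ^ 3 + 27 * B ^ 2) * p ^ 3 - 4 * (A ^ 2 * B) * p ^ 2 * q +
          4 * A * (3 * A ^ 3 + 22 * B ^ 2) * p * q ^ 2 + 12 * B * (A ^ 3 + 8 * B ^ 2) * q ^ 3)
        (A ^ 2 * B * p ^ 3 + A * (5 * A ^ 3 + 32 * B ^ 2) * p ^ 2 * q +
          2 * B * (13 * A ^ 3 + 96 * B ^ 2) * p * q ^ 2 - 3 * A ^ 2 * (A ^ 3 + 8 * B ^ 2) * q ^ 3)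
        ?_ ?_ ?_
      · apply Bd.mono hM
        focus
          repeat' first
            | assumption | apply Bd.add hM | apply Bd.sub hM | apply Bd.mul hM | apply Bd.pow
        decide
      · apply Bd.mono hM
        focus
          repeat' first
            | assumption | apply Bd.add hM | apply Bd.sub hM | apply Bd.mul hM | apply Bd.pow
        decide
      · rw [hF, hG, h11]; ring
    · refine key (12 * p ^ 2 * q + 16 * A * q ^ 3) (-(3 * p ^ 3 - 5 * A * p * q ^ 2 - 27 * B * q ^ 3))
        ?_ ?_ ?_
      · apply Bd.mono hM
        focus
          repeat' first
            | assumption | apply Bd.add hM | apply Bd.sub hM | apply Bd.mul hM | apply Bd.pow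
        decide
      · apply Bd.mono hM
        focus
          apply Bd.neg
          repeat' first
            | assumption | apply Bd.add hM | apply Bd.sub hM | apply Bd.mul hM | apply Bd.pow
        decide
      · rw [hF, hG, h11]; ring
  rw [← hGn, ← mul_assoc (max 1 ‖x'‖), hmax, ← mul_assoc]
  exact le_mul_of_one_le_left (by positivity) hlow

end Local

end APB

namespace APB

section Local2

variable {L : Type*} [NormedField L] {M : ℝ}

/-- A `2 × 2` determinant measuring affine dependence of three pairs. -/
def D3 {K : Type*} [Field K] (a1 a2 a3 k1 k2 k3 : K) : K :=
  (a2 - a1) * (k3 - k1) - (a3 - a1) * (k2 - k1)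

lemma local_tors (hM : QT L M) {A B x : L} (hA : Bd M A 1) (hB : Bd M B 1)
    (h : x ^ 3 + A * x + B = 0) : max 1 ‖x‖ ≤ M ^ 1 := by
  rw [pow_one]
  refine max_le hM.1 ?_
  rcases le_total ‖x‖ 1 with h1 | h1
  · exact h1.trans hM.1
  have hM0 : 0 ≤ M := zero_le_one.trans hM.1
  have h2 := hM.2 (-(A * x)) (-B)
  rw [show -(A * x) + -B = x ^ 3 by linear_combination -h, norm_neg, norm_neg, norm_mul,
    norm_pow] at h2
  unfold Bd at hA hB
  rw [pow_one] at hA hB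
  have h3 : max (‖A‖ * ‖x‖) ‖B‖ ≤ M * ‖x‖ := by
    refine max_le (by gcongr) ?_
    nlinarith
  have h4 : ‖x‖ ^ 3 ≤ M * (M * ‖x‖) := h2.trans (mul_le_mul_of_nonneg_left h3 hM0)
  have h5 : ‖x‖ ^ 2 ≤ M ^ 2 := by
    have : 0 < ‖x‖ := by linarith
    nlinarith
  exact le_of_sq_le_sq h5 hM0

lemma bd_y (hM : QT L M) {A B x y : L} (hA : Bd M A 1) (hB : Bd M B 1) (hx : Bd M x 1)
    (h : y ^ 2 = x ^ 3 + A * x + B) : Bd M y 3 := by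
  apply Bd.of_sq hM
  rw [h]
  apply Bd.mono hM
  focus
    repeat' first
      | assumption | apply Bd.add hM | apply Bd.sub hM | apply Bd.mul hM | apply Bd.pow
  decide

/-- What happens near infinity. -/
lemma near_inf (hM : QT L M) {A B X Y : L} (hA : Bd M A 1) (hB : Bd M B 1)
    (h : Y ^ 2 = X ^ 3 + A * X + B) (hX : M ^ 20 < ‖X‖) :
    ∃ r w w' : L, X * r = 1 ∧ Y ^ 2 = X ^ 3 * w ∧ w * w' = 1 ∧ w = 1 + A * r ^ 2 + B * r ^ 3 ∧
      Bd M r 0 ∧ M ^ 20 * ‖r‖ < 1 ∧ Bd M w' 1 := by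
  have hM0 : 0 < M := zero_lt_one.trans_le hM.1
  have hXp : 0 < ‖X‖ := lt_trans (by positivity) hX
  have hX0 : X ≠ 0 := norm_pos_iff.mp hXp
  have hr : M ^ 20 * ‖X⁻¹‖ < 1 := by
    rw [norm_inv, ← div_eq_mul_inv, div_lt_one hXp]; exact hX
  have hr1 : ‖X⁻¹‖ ≤ 1 := by
    have : 1 ≤ M ^ 20 := one_le_pow₀ hM.1
    nlinarith [norm_nonneg X⁻¹]
  have hz : M * ‖A * X⁻¹ ^ 2 + B * X⁻¹ ^ 3‖ < 1 := by
    have e : A * X⁻¹ ^ 2 + B * X⁻¹ ^ 3 = X⁻¹ * (X⁻¹ * (A + B * X⁻¹)) := by ring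
    have b : Bd M (X⁻¹ * (A + B * X⁻¹)) 2 := by
      have br : Bd M X⁻¹ 0 := by simpa [Bd] using hr1
      apply Bd.mono hM
      focus
        repeat' first
          | assumption | apply Bd.add hM | apply Bd.sub hM | apply Bd.mul hM | apply Bd.pow
      decide
    rw [e, norm_mul]
    have h1 : M ^ 3 ≤ M ^ 20 := pow_le_pow_right₀ hM.1 (by norm_num)
    unfold Bd at b
    calc M * (‖X⁻¹‖ * ‖X⁻¹ * (A + B * X⁻¹)‖) ≤ M * (‖X⁻¹‖ * M ^ 2) := by gcongr
      _ = M ^ 3 * ‖X⁻¹‖ := by ring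
      _ ≤ M ^ 20 * ‖X⁻¹‖ := by gcongr
      _ < 1 := hr
  obtain ⟨hw0, hw1⟩ := inv_near hM hz
  rw [← add_assoc] at hw0 hw1
  refine ⟨X⁻¹, _, _, mul_inv_cancel₀ hX0, ?_, mul_inv_cancel₀ hw0, rfl, by simpa [Bd] using hr1,
    hr, hw1⟩
  rw [h]; field_simp

lemma bd_max {e X : L} {n : ℕ} (h1 : Bd M (e ^ 2) n) (h2 : Bd M (e ^ 2 * X) n) :
    ‖e‖ ^ 2 * max 1 ‖X‖ ≤ M ^ n := by
  unfold Bd at h1 h2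
  rw [norm_mul] at h2
  rw [norm_pow] at h1 h2
  rw [mul_max_of_nonneg _ _ (by positivity), mul_one]
  exact max_le h1 h2

/-- Local estimate: a point is controlled by three points with which it satisfies a relation. -/
lemma local_shell (hM : QT L M) {A B X Y a1 a2 a3 b1 b2 b3 k k1 k2 k3 : L}
    (hA : Bd M A 1) (hB : Bd M B 1) (h : Y ^ 2 = X ^ 3 + A * X + B)
    (ha1 : Bd M a1 1) (ha2 : Bd M a2 1) (ha3 : Bd M a3 1)
    (hb1 : b1 ^ 2 = a1 ^ 3 + A * a1 + B) (hb2 : b2 ^ 2 = a2 ^ 3 + A * a2 + B)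
    (hb3 : b3 ^ 2 = a3 ^ 3 + A * a3 + B)
    (hk : Bd M k 1) (hk1 : Bd M k1 1) (hk2 : Bd M k2 1) (hk3 : Bd M k3 1)
    (hdet : (Y - b1) * D3 a1 a2 a3 k1 k2 k3 - (X - a1) * D3 b1 b2 b3 k1 k2 k3 +
      (k - k1) * ((b2 - b1) * (a3 - a1) - (b3 - b1) * (a2 - a1)) = 0) :
    (D3 a1 a2 a3 k1 k2 k3 ≠ 0 → ‖D3 a1 a2 a3 k1 k2 k3‖ ^ 2 * max 1 ‖X‖ ≤ M ^ 50) ∧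
    (D3 a1 a2 a3 k1 k2 k3 = 0 → ‖D3 b1 b2 b3 k1 k2 k3‖ ^ 2 * max 1 ‖X‖ ≤ M ^ 50) := by
  have c1 := bd_y hM hA hB ha1 hb1
  have c2 := bd_y hM hA hB ha2 hb2
  have c3 := bd_y hM hA hB ha3 hb3
  have be1 : Bd M (D3 a1 a2 a3 k1 k2 k3) 5 := by
    unfold D3
    apply Bd.mono hM
    focus
      repeat' first
        | assumption | apply Bd.add hM | apply Bd.sub hM | apply Bd.mul hM | apply Bd.pow
    decide
  have be2 : Bd M (D3 b1 b2 b3 k1 k2 k3) 7 := by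
    unfold D3
    apply Bd.mono hM
    focus
      repeat' first
        | assumption | apply Bd.add hM | apply Bd.sub hM | apply Bd.mul hM | apply Bd.pow
    decide
  set e1 := D3 a1 a2 a3 k1 k2 k3
  set e2 := D3 b1 b2 b3 k1 k2 k3
  have bm : Bd M (e1 * b1 - a1 * e2 - (k - k1) * ((b2 - b1) * (a3 - a1) - (b3 - b1) * (a2 - a1))) 12 := by
    apply Bd.mono hM
    focus
      repeat' first
        | assumption | apply Bd.add hM | apply Bd.sub hM | apply Bd.mul hM | apply Bd.pow
    decide
  set m := e1 * b1 - a1 * e2 - (k - k1) * ((b2 - b1) * (a3 - a1) - (b3 - b1) * (a2 - a1)) with hm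
  have hrel : e1 * Y = X * e2 + m := by rw [hm]; linear_combination hdet
  have be1' : Bd M (e1 ^ 2) 50 := (be1.pow 2).mono hM (by decide)
  have be2' : Bd M (e2 ^ 2) 50 := (be2.pow 2).mono hM (by decide)
  rcases le_or_gt ‖X‖ (M ^ 20) with hX | hX
  · have bX : Bd M X 20 := hX
    constructor
    · intro _
      exact bd_max be1' (((be1.pow 2).mul hM bX).mono hM (by decide))
    · intro _
      exact bd_max be2' (((be2.pow 2).mul hM bX).mono hM (by decide))
  obtain ⟨r, w, w', hr, hw, hww, -, br, -, bw⟩ := near_inf hM hA hB h hX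
  constructor
  · intro _
    refine bd_max be1' ?_
    have e : e1 ^ 2 * X = (e2 + m * r) ^ 2 * w' := by
      have h1 : (e1 * Y) ^ 2 = (X * e2 + m) ^ 2 := by rw [hrel]
      have h2 : e1 ^ 2 * X ^ 3 * w = (X * e2 + m) ^ 2 := by rw [← h1, mul_pow, hw]; ring
      have h3 : e1 ^ 2 * X * (X * r) ^ 2 * (w * w') = (X * r * e2 + m * r) ^ 2 * w' := by
        linear_combination r ^ 2 * w' * h2
      rw [hr, hww] at h3
      linear_combination h3
    rw [e]
    apply Bd.mono hM
    focus
      repeat' first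
        | assumption | apply Bd.add hM | apply Bd.sub hM | apply Bd.mul hM | apply Bd.pow
    decide
  · intro he
    refine bd_max be2' ?_
    have e : e2 ^ 2 * X = -(m * e2) := by
      rw [he] at hrel; linear_combination -e2 * hrel
    rw [e]
    exact ((bm.mul hM be2).neg).mono hM (by decide)

/-- Expansion of `P + T` for `P` near infinity. -/
lemma local_exp (hM : QT L M) {A B X Y a b X' Y' r w t : L}
    (hA : Bd M A 1) (hB : Bd M B 1) (ha : Bd M a 1) (bb : Bd M b 3)
    (h : Y ^ 2 = X ^ 3 + A * X + B) (hb : b ^ 2 = a ^ 3 + A * a + B)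
    (hXr : X * r = 1) (hw : w = 1 + A * r ^ 2 + B * r ^ 3) (hr : M ^ 20 * ‖r‖ < 1)
    (ht : t * Y = -X) (hrt : r = t ^ 2 * w) (bt : Bd M t 0) (br : Bd M r 0) (bw : Bd M w 3)
    (hX' : X ≠ a → X' = ((b - Y) / (a - X)) ^ 2 - a - X ∧
      Y' = -((b - Y) / (a - X) * (X' - a) + b)) :
    ∃ x y : L, X' = a + 2 * b * t + t ^ 2 * x ∧ Y' = b + t * y ∧ Bd M x 20 ∧ Bd M y 40 := by
  have hM0 : 0 < M := zero_lt_one.trans_le hM.1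
  have hz : M * ‖-(a * r)‖ < 1 := by
    rw [norm_neg, norm_mul]
    unfold Bd at ha
    have h1 : M ^ 2 ≤ M ^ 20 := pow_le_pow_right₀ hM.1 (by norm_num)
    calc M * (‖a‖ * ‖r‖) ≤ M * (M ^ 1 * ‖r‖) := by gcongr
      _ = M ^ 2 * ‖r‖ := by ring
      _ ≤ M ^ 20 * ‖r‖ := by gcongr
      _ < 1 := hr
  obtain ⟨hu0, hu1⟩ := inv_near hM hz
  have hX0 : X ≠ 0 := by rintro rfl; simp at hXr
  have ht0 : t ≠ 0 := by
    rintro rfl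
    rw [zero_mul] at ht
    exact hX0 (neg_eq_zero.mp ht.symm)
  have hXa : X ≠ a := by
    rintro rfl
    rw [hXr] at hu0
    simp at hu0
  obtain ⟨h1, h2⟩ := hX' hXa
  set u := (1 + -(a * r))⁻¹ with hu
  have huu : u * (1 - a * r) = 1 := by
    rw [← sub_eq_add_neg] at hu hu0
    rw [hu, inv_mul_cancel₀ hu0]
  have hY : Y * t = -X := by linear_combination ht
  have hℓ : (b - Y) / (a - X) * t = -(u * (1 + b * r * t)) := by
    have hne : a - X ≠ 0 := sub_ne_zero.mpr hXa.symm
    field_simp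
    have e : (a - X) * u = -X := by
      linear_combination (-X) * huu - a * u * hXr
    linear_combination -hY + (1 + b * r * t) * e - b * t * hXr
  set ℓ := (b - Y) / (a - X)
  have hXt : X' * t ^ 2 = (u * (1 + b * r * t)) ^ 2 - a * t ^ 2 - X * t ^ 2 := by
    rw [h1]; linear_combination (ℓ * t - u * (1 + b * r * t)) * hℓ
  have hXt2 : X * t ^ 2 * w = 1 := by rw [← hXr, hrt]; ring
  have hw0 : w ≠ 0 := by rintro rfl; simp at hXt2
  have hr0 : r ≠ 0 := by rintro rfl; simp at hXr
  obtain ⟨E, hE⟩ : ∃ E, E = A + a ^ 2 + a * A * r + 2 * B * r + 2 * b * t * (A * r + B * r ^ 2) +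
      (a + 2 * b * t) * (2 * a - a ^ 2 * r) := ⟨_, rfl⟩
  have b2 := Bd.two (L := L) hM
  have bE : Bd M E 12 := by
    rw [hE]
    apply Bd.mono hM
    focus
      repeat' first
        | assumption | apply Bd.add hM | apply Bd.sub hM | apply Bd.mul hM | apply Bd.pow
    decide
  have key : w * (1 + b * r * t) ^ 2 = (1 + 2 * a * r + 2 * b * t * r) * (1 - a * r) ^ 2
      + r ^ 2 * E := by
    rw [hE]
    linear_combination (-(b ^ 2 * r ^ 2)) * hrt + (1 + 2 * b * r * t) * hw + r ^ 3 * hb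
  have bx : Bd M (w * u ^ 2 * E) 20 := by
    apply Bd.mono hM
    focus
      repeat' first
        | assumption | apply Bd.add hM | apply Bd.sub hM | apply Bd.mul hM | apply Bd.pow
    decide
  have hx : X' = a + 2 * b * t + t ^ 2 * (w * u ^ 2 * E) := by
    apply mul_right_cancel₀ hr0
    have e1 : X' * r = w * (u * (1 + b * r * t)) ^ 2 - a * r - 1 := by
      linear_combination w * hXt + (X' + a) * hrt - hXt2
    have e2 : u ^ 2 * (1 - a * r) ^ 2 = 1 := by rw [← mul_pow, huu, one_pow]
    linear_combination e1 + u ^ 2 * key + (1 + 2 * a * r + 2 * b * t * r) * e2 +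
      r * u ^ 2 * E * hrt
  refine ⟨w * u ^ 2 * E, w * u ^ 2 * E + u * t * w * (a + b * t) * (2 * b + t * (w * u ^ 2 * E)),
    hx, ?_, bx, ?_⟩
  · generalize w * u ^ 2 * E = x at *
    apply mul_right_cancel₀ ht0
    rw [h2, hx]
    have e3 : u * (1 + b * r * t) = 1 + t * (u * t * w * (a + b * t)) := by
      linear_combination huu + u * (a + b * t) * hrt
    linear_combination (-(2 * b * t + t ^ 2 * x)) * hℓ + (2 * b * t + t ^ 2 * x) * e3
  · generalize w * u ^ 2 * E = x at *
    apply Bd.mono hM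
    focus
      repeat' first
        | assumption | apply Bd.add hM | apply Bd.sub hM | apply Bd.mul hM | apply Bd.pow
    decide

/-- Local estimate: a point is controlled by its differences to three neighbours. -/
lemma local_cluster (hM : QT L M) {A B X Y a1 a2 a3 b1 b2 b3 X1 X2 X3 Y1 Y2 Y3 k k1 k2 k3 : L}
    (hA : Bd M A 1) (hB : Bd M B 1) (h3 : 1 ≤ M * ‖(3 : L)‖) (h : Y ^ 2 = X ^ 3 + A * X + B)
    (ha1 : Bd M a1 1) (ha2 : Bd M a2 1) (ha3 : Bd M a3 1)
    (hb1 : b1 ^ 2 = a1 ^ 3 + A * a1 + B) (hb2 : b2 ^ 2 = a2 ^ 3 + A * a2 + B)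
    (hb3 : b3 ^ 2 = a3 ^ 3 + A * a3 + B)
    (hX1 : X ≠ a1 → X1 = ((b1 - Y) / (a1 - X)) ^ 2 - a1 - X ∧
      Y1 = -((b1 - Y) / (a1 - X) * (X1 - a1) + b1))
    (hX2 : X ≠ a2 → X2 = ((b2 - Y) / (a2 - X)) ^ 2 - a2 - X ∧
      Y2 = -((b2 - Y) / (a2 - X) * (X2 - a2) + b2))
    (hX3 : X ≠ a3 → X3 = ((b3 - Y) / (a3 - X)) ^ 2 - a3 - X ∧
      Y3 = -((b3 - Y) / (a3 - X) * (X3 - a3) + b3))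
    (hk : Bd M k 1) (hk1 : Bd M k1 1) (hk2 : Bd M k2 1) (hk3 : Bd M k3 1)
    (hdet : (Y - Y1) * D3 X1 X2 X3 k1 k2 k3 - (X - X1) * D3 Y1 Y2 Y3 k1 k2 k3 +
      (k - k1) * ((Y2 - Y1) * (X3 - X1) - (Y3 - Y1) * (X2 - X1)) = 0) :
    (D3 a1 a2 a3 k1 k2 k3 ≠ 0 → ‖D3 a1 a2 a3 k1 k2 k3‖ ^ 2 * max 1 ‖X‖ ≤ M ^ 300) ∧
    (D3 a1 a2 a3 k1 k2 k3 = 0 → ‖D3 b1 b2 b3 k1 k2 k3‖ ^ 2 * max 1 ‖X‖ ≤ M ^ 300) := by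
  have hM0 : 0 < M := zero_lt_one.trans_le hM.1
  have c1 := bd_y hM hA hB ha1 hb1
  have c2 := bd_y hM hA hB ha2 hb2
  have c3 := bd_y hM hA hB ha3 hb3
  have be1 : Bd M (D3 a1 a2 a3 k1 k2 k3) 5 := by
    unfold D3
    apply Bd.mono hM
    focus
      repeat' first
        | assumption | apply Bd.add hM | apply Bd.sub hM | apply Bd.mul hM | apply Bd.pow
    decide
  have be2 : Bd M (D3 b1 b2 b3 k1 k2 k3) 7 := by
    unfold D3
    apply Bd.mono hM
    focus
      repeat' first
        | assumption | apply Bd.add hM | apply Bd.sub hM | apply Bd.mul hM | apply Bd.pow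
    decide
  have be1' : Bd M (D3 a1 a2 a3 k1 k2 k3 ^ 2) 300 := (be1.pow 2).mono hM (by decide)
  have be2' : Bd M (D3 b1 b2 b3 k1 k2 k3 ^ 2) 300 := (be2.pow 2).mono hM (by decide)
  rcases le_or_gt ‖X‖ (M ^ 20) with hX | hX
  · have bX : Bd M X 20 := hX
    constructor
    · intro _
      exact bd_max be1' (((be1.pow 2).mul hM bX).mono hM (by decide))
    · intro _
      exact bd_max be2' (((be2.pow 2).mul hM bX).mono hM (by decide))
  obtain ⟨r, w, w', hr, hw, hww, hwe, br, hr20, bw'⟩ := near_inf hM hA hB h hX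
  have bw : Bd M w 3 := by
    rw [hwe]
    have b1 := Bd.one (L := L) (M := M)
    apply Bd.mono hM
    focus
      repeat' first
        | assumption | apply Bd.add hM | apply Bd.sub hM | apply Bd.mul hM | apply Bd.pow
    decide
  have hX0 : X ≠ 0 := by rintro rfl; simp at hr
  have hw0 : w ≠ 0 := by rintro rfl; simp at hww
  have hY0 : Y ≠ 0 := by
    rintro rfl
    rw [zero_pow two_ne_zero] at hw
    exact mul_ne_zero (pow_ne_zero 3 hX0) hw0 hw.symm
  obtain ⟨t, ht⟩ : ∃ t, t * Y = -X := ⟨-X / Y, by field_simp⟩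
  have hrt : r = t ^ 2 * w := by
    have e1 : t ^ 2 * (X ^ 3 * w) = X ^ 2 := by
      rw [← hw]; linear_combination (t * Y - X) * ht
    have e2 : t ^ 2 * w * X = 1 := by
      apply mul_right_cancel₀ (pow_ne_zero 2 hX0); linear_combination e1
    linear_combination t ^ 2 * w * hr - r * e2
  have ht2 : t ^ 2 = r * w' := by rw [hrt]; linear_combination -t ^ 2 * hww
  have bt : Bd M t 0 := by
    apply Bd.of_sq hM
    unfold Bd at bw' ⊢
    rw [ht2, norm_mul]
    have h1 : M ^ 1 ≤ M ^ 20 := pow_le_pow_right₀ hM.1 (by norm_num)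
    calc ‖r‖ * ‖w'‖ ≤ ‖r‖ * M ^ 20 := by gcongr; exact bw'.trans h1
      _ ≤ M ^ (2 * 0) := by rw [mul_zero, pow_zero, mul_comm]; exact hr20.le
  obtain ⟨x1, y1, rfl, rfl, bx1, by1⟩ := local_exp hM hA hB ha1 c1 h hb1 hr hwe hr20 ht hrt bt br bw hX1
  obtain ⟨x2, y2, rfl, rfl, bx2, by2⟩ := local_exp hM hA hB ha2 c2 h hb2 hr hwe hr20 ht hrt bt br bw hX2
  obtain ⟨x3, y3, rfl, rfl, bx3, by3⟩ := local_exp hM hA hB ha3 c3 h hb3 hr hwe hr20 ht hrt bt br bw hX3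
  clear hX1 hX2 hX3
  obtain ⟨e1, he1⟩ : ∃ e1, e1 = D3 a1 a2 a3 k1 k2 k3 := ⟨_, rfl⟩
  obtain ⟨e2, he2⟩ : ∃ e2, e2 = D3 b1 b2 b3 k1 k2 k3 := ⟨_, rfl⟩
  rw [← he1] at be1 be1'
  rw [← he2] at be2 be2'
  rw [← he1, ← he2]
  have bd2 := Bd.two (L := L) hM
  have b3' := Bd.three (L := L) hM
  obtain ⟨z, bz, hz⟩ : ∃ z, Bd M z 130 ∧ e1 + 3 * t * e2 = t ^ 2 * z := by
    refine ⟨t * w * (-(b1 + t * y1) * D3 (a1 + 2 * b1 * t + t ^ 2 * x1) (a2 + 2 * b2 * t + t ^ 2 * x2)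
        (a3 + 2 * b3 * t + t ^ 2 * x3) k1 k2 k3 + (a1 + 2 * b1 * t + t ^ 2 * x1) *
        D3 (b1 + t * y1) (b2 + t * y2) (b3 + t * y3) k1 k2 k3 +
        (k - k1) * (((b2 + t * y2) - (b1 + t * y1)) *
          ((a3 + 2 * b3 * t + t ^ 2 * x3) - (a1 + 2 * b1 * t + t ^ 2 * x1)) -
          ((b3 + t * y3) - (b1 + t * y1)) *
          ((a2 + 2 * b2 * t + t ^ 2 * x2) - (a1 + 2 * b1 * t + t ^ 2 * x1)))) -
        D3 x1 x2 x3 k1 k2 k3 - D3 y1 y2 y3 k1 k2 k3, ?_, ?_⟩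
    · have n1 : Bd M (-(b1 + t * y1)) 41 := by
        apply Bd.neg
        apply Bd.mono hM
        focus
          repeat' first
            | assumption | apply Bd.add hM | apply Bd.sub hM | apply Bd.mul hM | apply Bd.pow
        decide
      unfold D3
      apply Bd.mono hM
      focus
        repeat' first
          | assumption | apply Bd.add hM | apply Bd.sub hM | apply Bd.mul hM | apply Bd.pow
      decide
    · rw [he1, he2]
      unfold D3 at hdet ⊢
      have hm : ∀ U V p q m : L, (Y - p) * U - (X - q) * V + m = 0 →
          U + t * V = t ^ 3 * w * (-p * U + q * V + m) := by
        intro U V p q m hh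
        linear_combination (-t * r) * hh + r * U * ht - (U + t * V) * hr +
          t * (-p * U + q * V + m) * hrt
      have := hm _ _ _ _ _ hdet
      linear_combination this
  have hXt : t ^ 2 * w * X = 1 := by rw [← hrt]; linear_combination hr
  constructor
  · intro _
    refine bd_max be1' ?_
    have e : e1 ^ 2 * X = (t * z - 3 * e2) ^ 2 * w' := by
      have : e1 = t * (t * z - 3 * e2) := by linear_combination hz
      rw [this]
      linear_combination (t * z - 3 * e2) ^ 2 * w' * hXt - (t * z - 3 * e2) ^ 2 * t ^ 2 * X * hww
    rw [e]
    apply Bd.mono hM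
    focus
      repeat' first
        | assumption | apply Bd.add hM | apply Bd.sub hM | apply Bd.mul hM | apply Bd.pow
    decide
  · intro he
    refine bd_max be2' ?_
    have ht0 : t ≠ 0 := by
      rintro rfl
      rw [zero_mul] at ht
      exact hX0 (neg_eq_zero.mp ht.symm)
    have h30 : (3 : L) ≠ 0 := by
      intro h30; rw [h30, norm_zero, mul_zero] at h3; linarith
    have b3i : Bd M (3⁻¹ : L) 1 := by
      unfold Bd
      rw [norm_inv, pow_one, inv_le_iff_one_le_mul₀ (norm_pos_iff.mpr h30)]
      exact h3
    have e0 : e2 = t * z * 3⁻¹ := by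
      rw [he, zero_add] at hz
      field_simp
      apply mul_left_cancel₀ ht0
      linear_combination hz
    have e : e2 ^ 2 * X = (z * 3⁻¹) ^ 2 * w' := by
      rw [e0]
      linear_combination (z * 3⁻¹) ^ 2 * w' * hXt - (z * 3⁻¹) ^ 2 * t ^ 2 * X * hww
    rw [e]
    apply Bd.mono hM
    focus
      repeat' first
        | assumption | apply Bd.add hM | apply Bd.sub hM | apply Bd.mul hM | apply Bd.pow
    decide

end Local2

end APB

/-! ### Summation over places -/

namespace APB

open Height Real

section Places

variable {K : Type} [Field K] [AdmissibleAbsValues K]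

/-- `v` is one of the places of `K`. -/
def IsPl (v : AbsoluteValue K ℝ) : Prop :=
  v ∈ AdmissibleAbsValues.archAbsVal (K := K) ∨ v ∈ AdmissibleAbsValues.nonarchAbsVal (K := K)

/-- Finite support on the nonarchimedean places. -/
def FS (f : AbsoluteValue K ℝ → ℝ) : Prop :=
  (Function.support fun v : AdmissibleAbsValues.nonarchAbsVal (K := K) => f v.val).Finite

/-- Sum over all places. -/
noncomputable def gs (f : AbsoluteValue K ℝ → ℝ) : ℝ :=
  ((AdmissibleAbsValues.archAbsVal (K := K)).map f).sum +
    ∑ᶠ v : AdmissibleAbsValues.nonarchAbsVal (K := K), f v.val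

lemma FS.add {f g : AbsoluteValue K ℝ → ℝ} (hf : FS f) (hg : FS g) :
    FS (fun v => f v + g v) :=
  (hf.union hg).subset (Function.support_add _ _)

lemma FS.smul {f : AbsoluteValue K ℝ → ℝ} (c : ℝ) (hf : FS f) : FS (fun v => c * f v) :=
  hf.subset (fun v hv => by
    simp only [Function.mem_support] at hv ⊢
    exact right_ne_zero_of_mul hv)

lemma gs_add {f g : AbsoluteValue K ℝ → ℝ} (hf : FS f) (hg : FS g) :
    gs (fun v => f v + g v) = gs f + gs g := by
  unfold gs
  rw [Multiset.sum_map_add, finsum_add_distrib hf hg]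
  ring

lemma gs_smul {f : AbsoluteValue K ℝ → ℝ} (c : ℝ) (hf : FS f) :
    gs (fun v => c * f v) = c * gs f := by
  unfold gs
  rw [Multiset.sum_map_mul_left, mul_add]
  congr 1
  exact (mul_finsum _ c).symm

lemma gs_mono {f g : AbsoluteValue K ℝ → ℝ} (hf : FS f) (hg : FS g)
    (h : ∀ v, IsPl v → f v ≤ g v) : gs f ≤ gs g := by
  unfold gs
  refine add_le_add (Multiset.sum_map_le_sum_map _ _ fun v hv => h v (Or.inl hv)) ?_
  exact finsum_le_finsum' hf hg (fun v => h v.1 (Or.inr v.2))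

lemma fs_log {x : K} (hx : x ≠ 0) : FS (fun v => log (v x)) := by
  refine (AdmissibleAbsValues.hasFiniteMulSupport hx).subset ?_
  intro v hv hv'
  apply hv
  simp only at hv' ⊢
  rw [hv', log_one]

lemma gs_log {x : K} (hx : x ≠ 0) : gs (fun v => log (v x)) = 0 := by
  have h := AdmissibleAbsValues.product_formula (K := K) hx
  have h2 := congrArg log h
  have hp : ∀ v : AbsoluteValue K ℝ, v x ≠ 0 := fun v => v.ne_zero hx
  have H := (h.trans_ne one_ne_zero)
  rw [log_one, log_mul (left_ne_zero_of_mul H) (right_ne_zero_of_mul H),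
    log_finprod (fun v => v.1.pos hx), log_multiset_prod, Multiset.map_map] at h2
  · exact h2
  · intro a ha
    obtain ⟨v, -, rfl⟩ := Multiset.mem_map.mp ha
    exact hp v

lemma fs_posLog (x : K) : FS (fun v => log⁺ (v x)) := by
  by_cases hx : x = 0
  · subst hx
    simp [FS]
  refine (fs_log hx).subset ?_
  intro v hv hv'
  apply hv
  simp only at hv' ⊢
  rw [posLog, hv', max_self]

lemma gs_posLog (x : K) : gs (fun v => log⁺ (v x)) = logHeight₁ x := (logHeight₁_eq x).symm

end Places

end APB

/-! ### Heights on points and their basic properties -/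

namespace APB

open Height Real

section Glue

variable {K : Type} [Field K] [AdmissibleAbsValues K]

variable (K) in
/-- The space of functions on places with finite support on the nonarchimedean ones. -/
def FSm : Submodule ℝ (AbsoluteValue K ℝ → ℝ) where
  carrier := {f | FS f}
  add_mem' hf hg := FS.add hf hg
  zero_mem' := by simp [FS]
  smul_mem' c _ hf := FS.smul c hf

/-- Sum over places as a linear form. -/
noncomputable def gsl : FSm K →ₗ[ℝ] ℝ where
  toFun f := gs f.1
  map_add' f g := gs_add f.2 g.2
  map_smul' c f := gs_smul c f.2

lemma gsl_mono {f g : FSm K} (h : ∀ v, IsPl v → f.1 v ≤ g.1 v) : gsl f ≤ gsl g :=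
  gs_mono f.2 g.2 h

/-- The function `v ↦ log |x|_v`. -/
noncomputable def eLog (x : K) : FSm K := ⟨fun v => log (v x), by
  by_cases hx : x = 0
  · subst hx
    simp [FSm, FS]
  · exact fs_log hx⟩

lemma gsl_eLog (x : K) : gsl (eLog x) = 0 := by
  by_cases hx : x = 0
  · subst hx
    simp [gsl, gs, eLog]
  · exact gs_log hx

/-- The function `v ↦ log⁺ |x|_v`. -/
noncomputable def ePos (x : K) : FSm K := ⟨fun v => log⁺ (v x), fs_posLog x⟩

lemma gsl_ePos (x : K) : gsl (ePos x) = logHeight₁ x := gs_posLog x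

/-- Local heights. -/
noncomputable def lp (D x : K) : FSm K := (1 / 6 : ℝ) • ePos (x ^ 6 / D)

/-- Local data. -/
structure LD (A B D : K) (s : FSm K) : Prop where
  D0 : D ≠ 0
  loc : ∀ v, IsPl v → ∃ (L : Type) (_ : NormedField L) (ι : K →+* L) (μ : L),
    (∀ x, ‖ι x‖ = v x) ∧ μ ^ 12 * ι D = 1 ∧ QT L (exp (s.1 v)) ∧
    Bd (exp (s.1 v)) (ι A * μ ^ 4) 1 ∧ Bd (exp (s.1 v)) (ι B * μ ^ 6) 1 ∧
    1 ≤ exp (s.1 v) * ‖(3 : L)‖ ∧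
    1 ≤ exp (s.1 v) ^ 10 * ‖4 * (4 * (ι A * μ ^ 4) ^ 3 + 27 * (ι B * μ ^ 6) ^ 2)‖

section Conv

variable {L : Type} [NormedField L] {ι : K →+* L} {μ : L} {v : AbsoluteValue K ℝ} {D : K}

lemma log_mu (hι : ∀ x, ‖ι x‖ = v x) (hμ : μ ^ 12 * ι D = 1) : log ‖μ‖ = -(1 / 12) * log (v D) := by
  have h := congrArg (fun z => log ‖z‖) hμ
  have hμ0 : μ ≠ 0 := by rintro rfl; simp at hμ
  have hD : ι D ≠ 0 := by intro h0; simp [h0] at hμ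
  simp only [norm_mul, norm_pow, norm_one, log_one] at h
  rw [log_mul (by simpa using hμ0) (by simpa using hD), log_pow, hι] at h
  push_cast at h
  linarith

lemma log_scaled (hι : ∀ x, ‖ι x‖ = v x) (hμ : μ ^ 12 * ι D = 1) {x : K} (hx : x ≠ 0) (n : ℕ) :
    log ‖ι x * μ ^ n‖ = log (v x) - n / 12 * log (v D) := by
  have hμ0 : μ ≠ 0 := by rintro rfl; simp at hμ
  rw [norm_mul, norm_pow, log_mul (by simpa using hx) (pow_ne_zero _ (by simpa using hμ0)), log_pow,
    log_mu hι hμ, hι]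
  ring

lemma log_max (hι : ∀ x, ‖ι x‖ = v x) (hμ : μ ^ 12 * ι D = 1) (x : K) :
    log (max 1 ‖ι x * μ ^ 2‖) = (lp D x).1 v := by
  have hD : ι D ≠ 0 := by intro h0; simp [h0] at hμ
  have h1 : v (x ^ 6 / D) = ‖ι x * μ ^ 2‖ ^ 6 := by
    rw [← hι, ← norm_pow, map_div₀, map_pow]
    congr 1
    rw [div_eq_iff hD]
    linear_combination -(ι x) ^ 6 * hμ
  change _ = 1 / 6 * log⁺ (v (x ^ 6 / D))
  rw [h1, posLog_pow, posLog_eq_log_max_one (norm_nonneg _)]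
  push_cast; ring

lemma max_eq_exp (hι : ∀ x, ‖ι x‖ = v x) (hμ : μ ^ 12 * ι D = 1) (x : K) :
    max 1 ‖ι x * μ ^ 2‖ = exp ((lp D x).1 v) := by
  rw [← log_max hι hμ, exp_log]
  exact zero_lt_one.trans_le (le_max_left _ _)

lemma norm_eq_exp (hι : ∀ x, ‖ι x‖ = v x) (hμ : μ ^ 12 * ι D = 1) {x : K} (hx : x ≠ 0) (n : ℕ) :
    ‖ι x * μ ^ n‖ = exp (log (v x) - n / 12 * log (v D)) := by
  have hμ0 : μ ≠ 0 := by rintro rfl; simp at hμ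
  rw [← log_scaled hι hμ hx, exp_log]
  rw [norm_pos_iff]
  exact mul_ne_zero (by simpa using hx) (pow_ne_zero _ hμ0)

end Conv

lemma LD.s_nonneg {A B D : K} {s : FSm K} (h : LD A B D s) {v : AbsoluteValue K ℝ} (hv : IsPl v) :
    0 ≤ s.1 v := by
  obtain ⟨L, _, ι, μ, hι, hμ, hQ, -⟩ := h.loc v hv
  have := hQ.1
  rwa [one_le_exp_iff] at this

lemma LD.gs_nonneg {A B D : K} {s : FSm K} (h : LD A B D s) : 0 ≤ gsl s := by
  have : gsl (0 : FSm K) ≤ gsl s := gsl_mono fun v hv => h.s_nonneg hv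
  rwa [map_zero] at this

variable {W : WeierstrassCurve K}

variable [CharZero K]

/-- The height of a point, normalized by `D`. -/
noncomputable def hp (D : K) (P : W.toAffine.Point) : ℝ := gsl (lp D (pX P))

lemma hp_eq (D : K) (P : W.toAffine.Point) : hp D P = 1 / 6 * logHeight₁ (pX P ^ 6 / D) := by
  rw [hp, lp, map_smul, gsl_ePos, smul_eq_mul]

lemma hp_nonneg (D : K) (P : W.toAffine.Point) : 0 ≤ hp D P := by
  rw [hp_eq]
  have := zero_le_logHeight₁ (pX P ^ 6 / D)
  positivity

lemma hp_zero (D : K) : hp D (0 : W.toAffine.Point) = 0 := by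
  rw [hp_eq, show pX (0 : W.toAffine.Point) = 0 from rfl]
  simp

lemma hp_neg (D : K) (P : W.toAffine.Point) : hp D (-P) = hp D P := by
  rw [hp, hp, pX_neg]

variable [DecidableEq K] {D : K} {s : FSm K}

lemma hp_double (h : LD (cA W) (cB W) D s) (P : W.toAffine.Point) :
    hp D (P + P) ≤ 4 * hp D P + 50 * gsl s ∧ 4 * hp D P ≤ hp D (P + P) + 50 * gsl s := by
  have hs := h.gs_nonneg
  by_cases hP : P = 0
  · subst hP
    rw [add_zero, hp_zero]
    constructor <;> linarith
  by_cases hY : pY P = 0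
  · rw [p_double_zero hY, hp_zero]
    have := hp_nonneg D P
    refine ⟨by linarith, ?_⟩
    have h1 : hp D P ≤ gsl s := by
      apply gsl_mono
      intro v hv
      obtain ⟨L, _, ι, μ, hι, hμ, hQ, hA, hB, -⟩ := h.loc v hv
      have e := congrArg ι (p_eqn hP)
      rw [hY] at e
      simp only [map_add, map_mul, map_pow, map_zero] at e
      have := local_tors hQ (x := ι (pX P) * μ ^ 2) hA hB (by linear_combination (-μ ^ 6) * e)
      rw [max_eq_exp hι hμ, pow_one, exp_le_exp] at this
      exact this
    linarith
  · obtain ⟨h0, hx, -⟩ := p_double hP hY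
    have h4 : 4 * (pX P ^ 3 + cA W * pX P + cB W) ≠ 0 := by
      rw [← p_eqn hP]
      exact mul_ne_zero (by norm_num) (pow_ne_zero _ hY)
    have hx' : pX (P + P) * (4 * (pX P ^ 3 + cA W * pX P + cB W)) =
        pX P ^ 4 - 2 * cA W * pX P ^ 2 - 8 * cB W * pX P + cA W ^ 2 := by
      rw [hx, div_pow, mul_pow, p_eqn hP]
      rw [← p_eqn hP]
      have : (4 : K) * pY P ^ 2 ≠ 0 := mul_ne_zero (by norm_num) (pow_ne_zero _ hY)
      rw [show (2 : K) ^ 2 = 4 by norm_num, sub_mul, div_mul_cancel₀ _ this, p_eqn hP]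
      ring
    have key : ∀ v, IsPl v → (lp D (pX (P + P)) + eLog (4 * (pX P ^ 3 + cA W * pX P + cB W)) -
          (1 / 2 : ℝ) • eLog D).1 v ≤ ((50 : ℝ) • s + (4 : ℝ) • lp D (pX P)).1 v ∧
        ((4 : ℝ) • lp D (pX P)).1 v ≤ ((50 : ℝ) • s + (lp D (pX (P + P)) +
          eLog (4 * (pX P ^ 3 + cA W * pX P + cB W)) - (1 / 2 : ℝ) • eLog D)).1 v := by
      intro v hv
      obtain ⟨L, _, ι, μ, hι, hμ, hQ, hA, hB, h3, hΔ⟩ := h.loc v hv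
      have e := congrArg ι hx'
      simp only [map_add, map_mul, map_pow, map_sub, map_ofNat] at e
      have := local_double hQ (x := ι (pX P) * μ ^ 2) (x' := ι (pX (P + P)) * μ ^ 2) hA hB hΔ
        (by linear_combination μ ^ 8 * e)
      rw [max_eq_exp hι hμ, max_eq_exp hι hμ, show 4 * ((ι (pX P) * μ ^ 2) ^ 3 + ι (cA W) * μ ^ 4 *
        (ι (pX P) * μ ^ 2) + ι (cB W) * μ ^ 6) = ι (4 * (pX P ^ 3 + cA W * pX P + cB W)) * μ ^ 6 by
        simp only [map_add, map_mul, map_pow, map_ofNat]; ring, norm_eq_exp hι hμ h4] at this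
      simp only [← exp_add, ← exp_nat_mul, exp_le_exp] at this
      push_cast at this
      simp only [Submodule.coe_add, Submodule.coe_sub, Submodule.coe_smul, Pi.add_apply,
        Pi.sub_apply, Pi.smul_apply, smul_eq_mul, eLog]
      constructor <;> linarith [this.1, this.2]
    have k1 := gsl_mono fun v hv => (key v hv).1
    have k2 := gsl_mono fun v hv => (key v hv).2
    simp only [map_add, map_sub, map_smul, gsl_eLog, smul_eq_mul] at k1 k2
    unfold hp
    constructor <;> linarith

lemma hp_par_upper (h : LD (cA W) (cB W) D s) (P Q : W.toAffine.Point) :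
    hp D (P + Q) + hp D (P - Q) ≤ 2 * (hp D P + hp D Q) + 50 * gsl s := by
  have hs := h.gs_nonneg
  by_cases hP : P = 0
  · subst hP
    rw [zero_add, zero_sub, hp_neg, hp_zero]; linarith
  by_cases hQ : Q = 0
  · subst hQ
    rw [add_zero, sub_zero, hp_zero]; linarith
  by_cases hx : pX P = pX Q
  · rcases p_ext_or hP hQ hx with rfl | rfl
    · rw [sub_self, hp_zero]
      linarith [(hp_double h P).1]
    · rw [neg_add_cancel, hp_zero, sub_eq_add_neg, hp_neg]
      have := (hp_double h (-Q)).1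
      rw [hp_neg] at this
      linarith
  · obtain ⟨-, h3, -⟩ := p_add hP hQ hx
    obtain ⟨-, h4, -⟩ := p_add hP (neg_ne hQ) (by rwa [pX_neg])
    rw [← sub_eq_add_neg, pX_neg, pY_neg] at h4
    have e1 := p_eqn hP
    have e2 := p_eqn hQ
    have hd : pX P - pX Q ≠ 0 := sub_ne_zero.mpr hx
    have k1 : (pX (P + Q) + pX (P - Q)) * (pX P - pX Q) ^ 2 =
        2 * (pX P * pX Q + cA W) * (pX P + pX Q) + 4 * cB W := by
      rw [h3, h4]
      field_simp
      linear_combination 2 * e1 + 2 * e2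
    have k0 : pX (P + Q) * pX (P - Q) * (pX P - pX Q) ^ 2 =
        (pX P * pX Q - cA W) ^ 2 - 4 * cB W * (pX P + pX Q) := by
      apply mul_right_cancel₀ (pow_ne_zero 2 hd)
      have j3 : pX (P + Q) * (pX P - pX Q) ^ 2 = (pY P - pY Q) ^ 2 - (pX P + pX Q) *
        (pX P - pX Q) ^ 2 := by rw [h3]; field_simp; ring
      have j4 : pX (P - Q) * (pX P - pX Q) ^ 2 = (pY P + pY Q) ^ 2 - (pX P + pX Q) *
        (pX P - pX Q) ^ 2 := by rw [h4]; field_simp; ring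
      have : pX (P + Q) * pX (P - Q) * (pX P - pX Q) ^ 2 * (pX P - pX Q) ^ 2 =
        ((pY P - pY Q) ^ 2 - (pX P + pX Q) * (pX P - pX Q) ^ 2) *
        ((pY P + pY Q) ^ 2 - (pX P + pX Q) * (pX P - pX Q) ^ 2) := by
        rw [← j3, ← j4]; ring
      rw [this]
      have c1 : ((pY P - pY Q) ^ 2 - (pX P + pX Q) * (pX P - pX Q) ^ 2) *
        ((pY P + pY Q) ^ 2 - (pX P + pX Q) * (pX P - pX Q) ^ 2) =
        (pY P ^ 2 - pY Q ^ 2) ^ 2 - 2 * (pY P ^ 2 + pY Q ^ 2) * ((pX P + pX Q) * (pX P - pX Q) ^ 2)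
        + ((pX P + pX Q) * (pX P - pX Q) ^ 2) ^ 2 := by ring
      rw [c1, e1, e2]
      ring
    have key : ∀ v, IsPl v → (lp D (pX (P + Q)) + lp D (pX (P - Q)) +
          (2 : ℝ) • eLog (pX P - pX Q) - (1 / 3 : ℝ) • eLog D).1 v ≤
        ((20 : ℝ) • s + (2 : ℝ) • lp D (pX P) + (2 : ℝ) • lp D (pX Q)).1 v := by
      intro v hv
      obtain ⟨L, _, ι, μ, hι, hμ, hQ, hA, hB, h3, hΔ⟩ := h.loc v hv
      have e0 := congrArg ι k0
      have e1 := congrArg ι k1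
      simp only [map_add, map_mul, map_pow, map_sub, map_ofNat] at e0 e1
      have := local_par hQ (x1 := ι (pX P) * μ ^ 2) (x2 := ι (pX Q) * μ ^ 2)
        (x3 := ι (pX (P + Q)) * μ ^ 2) (x4 := ι (pX (P - Q)) * μ ^ 2) hA hB
        (by linear_combination μ ^ 6 * e1) (by linear_combination μ ^ 8 * e0)
      rw [← sub_mul, ← map_sub, max_eq_exp hι hμ, max_eq_exp hι hμ, max_eq_exp hι hμ,
        max_eq_exp hι hμ, norm_eq_exp hι hμ hd] at this
      simp only [← exp_add, ← exp_nat_mul, exp_le_exp] at this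
      push_cast at this
      simp only [Submodule.coe_add, Submodule.coe_sub, Submodule.coe_smul, Pi.add_apply,
        Pi.sub_apply, Pi.smul_apply, smul_eq_mul, eLog]
      linarith
    have k1 := gsl_mono key
    simp only [map_add, map_sub, map_smul, gsl_eLog, smul_eq_mul] at k1
    unfold hp
    linarith

lemma hp_par (h : LD (cA W) (cB W) D s) (P Q : W.toAffine.Point) :
    |hp D (P + Q) + hp D (P - Q) - 2 * (hp D P + hp D Q)| ≤ 100 * gsl s := by
  have hs := h.gs_nonneg
  have h1 := hp_par_upper h P Q
  have h2 := hp_par_upper h (P + Q) (P - Q)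
  rw [show P + Q + (P - Q) = P + P by abel, show P + Q - (P - Q) = Q + Q by abel] at h2
  have h3 := (hp_double h P).2
  have h4 := (hp_double h Q).2
  rw [abs_le]
  constructor <;> linarith

end Glue

end APB

/-! ### Global consequences of the local estimates for related points -/

namespace APB

open Height Real

section Glue2

variable {K : Type} [Field K] [AdmissibleAbsValues K]

lemma QT.mono {L : Type} [NormedField L] {M M' : ℝ} (h : QT L M) (hM : M ≤ M') : QT L M' :=
  ⟨h.1.trans hM, fun a b => (h.2 a b).trans (by gcongr)⟩

lemma Bd.mono' {L : Type} [NormedField L] {M M' : ℝ} {a : L} {n : ℕ} (h0 : QT L M) (h : Bd M a n)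
    (hM : M ≤ M') : Bd M' a n :=
  le_trans h (pow_le_pow_left₀ (zero_le_one.trans h0.1) hM n)

lemma map_D3 {L : Type} [NormedField L] (ι : K →+* L) (μ : L) (n : ℕ) (a1 a2 a3 k1 k2 k3 : K) :
    D3 (ι a1 * μ ^ n) (ι a2 * μ ^ n) (ι a3 * μ ^ n) (ι k1) (ι k2) (ι k3) =
      ι (D3 a1 a2 a3 k1 k2 k3) * μ ^ n := by
  simp only [D3, map_sub, map_mul]; ring

lemma lp_nonneg (D x : K) (v : AbsoluteValue K ℝ) : 0 ≤ (lp D x).1 v := by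
  change 0 ≤ 1 / 6 * log⁺ _
  have := posLog_nonneg (x := v (x ^ 6 / D))
  positivity

lemma ePos_nonneg (x : K) (v : AbsoluteValue K ℝ) : 0 ≤ (ePos x).1 v := posLog_nonneg

lemma bd_ePos {L : Type} [NormedField L] {ι : K →+* L} {v : AbsoluteValue K ℝ} {x : K} {m : ℝ}
    (hι : ∀ x, ‖ι x‖ = v x) (h : (ePos x).1 v ≤ m) : Bd (exp m) (ι x) 1 := by
  unfold Bd
  rw [pow_one, hι]
  refine le_trans ?_ (exp_le_exp.mpr h)
  change _ ≤ exp (log⁺ (v x))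
  rw [posLog_eq_log_max_one (v.nonneg _), exp_log (by positivity)]
  exact le_max_right _ _

lemma bd_lp {L : Type} [NormedField L] {ι : K →+* L} {μ : L} {v : AbsoluteValue K ℝ} {D x : K}
    {m : ℝ} (hι : ∀ x, ‖ι x‖ = v x) (hμ : μ ^ 12 * ι D = 1) (h : (lp D x).1 v ≤ m) :
    Bd (exp m) (ι x * μ ^ 2) 1 := by
  unfold Bd
  rw [pow_one]
  refine le_trans ?_ (exp_le_exp.mpr h)
  rw [← max_eq_exp hι hμ]
  exact le_max_right _ _

variable [CharZero K] {W : WeierstrassCurve K} {D : K} {s : FSm K}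

lemma scaled_eqn {L : Type} [NormedField L] (ι : K →+* L) (μ : L) {P : W.toAffine.Point}
    (hP : P ≠ 0) : (ι (pY P) * μ ^ 3) ^ 2 = (ι (pX P) * μ ^ 2) ^ 3 +
      (ι (cA W) * μ ^ 4) * (ι (pX P) * μ ^ 2) + ι (cB W) * μ ^ 6 := by
  have e := congrArg ι (p_eqn hP)
  simp only [map_add, map_mul, map_pow] at e
  linear_combination μ ^ 6 * e

/-- The affine relation between four points and four labels. -/
def Dep (X Y k X1 X2 X3 Y1 Y2 Y3 k1 k2 k3 : K) : Prop :=
  (Y - Y1) * D3 X1 X2 X3 k1 k2 k3 - (X - X1) * D3 Y1 Y2 Y3 k1 k2 k3 +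
      (k - k1) * ((Y2 - Y1) * (X3 - X1) - (Y3 - Y1) * (X2 - X1)) = 0

lemma scaled_dep {L : Type} [NormedField L] (ι : K →+* L) (μ : L)
    {X Y k X1 X2 X3 Y1 Y2 Y3 k1 k2 k3 : K} (h : Dep X Y k X1 X2 X3 Y1 Y2 Y3 k1 k2 k3) :
    (ι Y * μ ^ 3 - ι Y1 * μ ^ 3) * D3 (ι X1 * μ ^ 2) (ι X2 * μ ^ 2) (ι X3 * μ ^ 2)
      (ι k1) (ι k2) (ι k3) - (ι X * μ ^ 2 - ι X1 * μ ^ 2) *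
      D3 (ι Y1 * μ ^ 3) (ι Y2 * μ ^ 3) (ι Y3 * μ ^ 3) (ι k1) (ι k2) (ι k3) +
      (ι k - ι k1) * ((ι Y2 * μ ^ 3 - ι Y1 * μ ^ 3) * (ι X3 * μ ^ 2 - ι X1 * μ ^ 2) -
        (ι Y3 * μ ^ 3 - ι Y1 * μ ^ 3) * (ι X2 * μ ^ 2 - ι X1 * μ ^ 2)) = 0 := by
  have e := congrArg ι h
  simp only [map_add, map_mul, map_pow, map_sub, map_zero] at e
  rw [map_D3, map_D3]
  linear_combination μ ^ 5 * e

/-- Final summation step. -/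
lemma sum_step (n : ℝ) {m : FSm K} {X e1 e2 : K} (hD : D ≠ 0) (hne : e1 ≠ 0 ∨ e2 ≠ 0)
    (hloc : ∀ v, IsPl v → ∃ (L : Type) (_ : NormedField L) (ι : K →+* L) (μ : L),
      (∀ x, ‖ι x‖ = v x) ∧ μ ^ 12 * ι D = 1 ∧
      (ι e1 * μ ^ 2 ≠ 0 → ‖ι e1 * μ ^ 2‖ ^ 2 * max 1 ‖ι X * μ ^ 2‖ ≤ exp (n * m.1 v)) ∧
      (ι e1 * μ ^ 2 = 0 → ‖ι e2 * μ ^ 3‖ ^ 2 * max 1 ‖ι X * μ ^ 2‖ ≤ exp (n * m.1 v))) :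
    gsl (lp D X) ≤ n * gsl m := by
  by_cases h1 : e1 = 0
  · have h2 : e2 ≠ 0 := by tauto
    have key : ∀ v, IsPl v → ((2 : ℝ) • eLog e2 - (1 / 2 : ℝ) • eLog D + lp D X).1 v ≤
        (n • m).1 v := by
      intro v hv
      obtain ⟨L, _, ι, μ, hι, hμ, -, hh⟩ := hloc v hv
      have := hh (by rw [h1]; simp)
      rw [max_eq_exp hι hμ, norm_eq_exp hι hμ h2] at this
      simp only [← exp_add, ← exp_nat_mul, exp_le_exp] at this
      push_cast at this
      simp only [Submodule.coe_add, Submodule.coe_sub, Submodule.coe_smul, Pi.add_apply,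
        Pi.sub_apply, Pi.smul_apply, smul_eq_mul, eLog]
      linarith
    have k1 := gsl_mono key
    simp only [map_add, map_sub, map_smul, gsl_eLog, smul_eq_mul] at k1
    linarith
  · have key : ∀ v, IsPl v → ((2 : ℝ) • eLog e1 - (1 / 3 : ℝ) • eLog D + lp D X).1 v ≤
        (n • m).1 v := by
      intro v hv
      obtain ⟨L, _, ι, μ, hι, hμ, hh, -⟩ := hloc v hv
      have hμ0 : μ ≠ 0 := by rintro rfl; simp at hμ
      have := hh (mul_ne_zero (by simpa using h1) (pow_ne_zero _ hμ0))
      rw [max_eq_exp hι hμ, norm_eq_exp hι hμ h1] at this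
      simp only [← exp_add, ← exp_nat_mul, exp_le_exp] at this
      push_cast at this
      simp only [Submodule.coe_add, Submodule.coe_sub, Submodule.coe_smul, Pi.add_apply,
        Pi.sub_apply, Pi.smul_apply, smul_eq_mul, eLog]
      linarith
    have k1 := gsl_mono key
    simp only [map_add, map_sub, map_smul, gsl_eLog, smul_eq_mul] at k1
    linarith

/-- The bound `m` for the size of all data at all places. -/
noncomputable def mm (s : FSm K) (D a1 a2 a3 k k1 k2 k3 : K) : FSm K :=
  s + lp D a1 + lp D a2 + lp D a3 + ePos k + ePos k1 + ePos k2 + ePos k3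

lemma gsl_mm (D : K) (Q1 Q2 Q3 : W.toAffine.Point) (k k1 k2 k3 : K) :
    gsl (mm s D (pX Q1) (pX Q2) (pX Q3) k k1 k2 k3) = gsl s + hp D Q1 + hp D Q2 + hp D Q3 +
      logHeight₁ k + logHeight₁ k1 + logHeight₁ k2 + logHeight₁ k3 := by
  simp only [mm, map_add, gsl_ePos, hp]

lemma mm_le {v : AbsoluteValue K ℝ} (D a1 a2 a3 k k1 k2 k3 : K) (hs : 0 ≤ s.1 v) :
    s.1 v ≤ (mm s D a1 a2 a3 k k1 k2 k3).1 v ∧ (lp D a1).1 v ≤ (mm s D a1 a2 a3 k k1 k2 k3).1 v ∧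
    (lp D a2).1 v ≤ (mm s D a1 a2 a3 k k1 k2 k3).1 v ∧
    (lp D a3).1 v ≤ (mm s D a1 a2 a3 k k1 k2 k3).1 v ∧
    (ePos k).1 v ≤ (mm s D a1 a2 a3 k k1 k2 k3).1 v ∧
    (ePos k1).1 v ≤ (mm s D a1 a2 a3 k k1 k2 k3).1 v ∧
    (ePos k2).1 v ≤ (mm s D a1 a2 a3 k k1 k2 k3).1 v ∧
    (ePos k3).1 v ≤ (mm s D a1 a2 a3 k k1 k2 k3).1 v := by
  have h1 := lp_nonneg D a1 v
  have h2 := lp_nonneg D a2 v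
  have h3 := lp_nonneg D a3 v
  have h4 := ePos_nonneg k v
  have h5 := ePos_nonneg k1 v
  have h6 := ePos_nonneg k2 v
  have h7 := ePos_nonneg k3 v
  have e : (mm s D a1 a2 a3 k k1 k2 k3).1 v = s.1 v + (lp D a1).1 v + (lp D a2).1 v +
    (lp D a3).1 v + (ePos k).1 v + (ePos k1).1 v + (ePos k2).1 v + (ePos k3).1 v := rfl
  rw [e]
  refine ⟨?_, ?_, ?_, ?_, ?_, ?_, ?_, ?_⟩ <;> linarith

lemma hp_shell (h : LD (cA W) (cB W) D s) {P Q1 Q2 Q3 : W.toAffine.Point} (hP : P ≠ 0)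
    (hQ1 : Q1 ≠ 0) (hQ2 : Q2 ≠ 0) (hQ3 : Q3 ≠ 0) {k k1 k2 k3 : K}
    (hdet : Dep (pX P) (pY P) k (pX Q1) (pX Q2) (pX Q3) (pY Q1) (pY Q2) (pY Q3) k1 k2 k3)
    (hne : D3 (pX Q1) (pX Q2) (pX Q3) k1 k2 k3 ≠ 0 ∨ D3 (pY Q1) (pY Q2) (pY Q3) k1 k2 k3 ≠ 0) :
    hp D P ≤ 50 * (gsl s + hp D Q1 + hp D Q2 + hp D Q3 +
      logHeight₁ k + logHeight₁ k1 + logHeight₁ k2 + logHeight₁ k3) := by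
  rw [← gsl_mm]
  refine sum_step 50 h.D0 hne ?_
  intro v hv
  obtain ⟨L, _, ι, μ, hι, hμ, hQ, hA, hB, h3, hΔ⟩ := h.loc v hv
  refine ⟨L, inferInstance, ι, μ, hι, hμ, ?_⟩
  obtain ⟨l0, l1, l2, l3, l4, l5, l6, l7⟩ := mm_le (s := s) D (pX Q1) (pX Q2) (pX Q3) k k1 k2 k3
    (h.s_nonneg hv)
  generalize (mm s D (pX Q1) (pX Q2) (pX Q3) k k1 k2 k3).1 v = m at *
  have hle := exp_le_exp.mpr l0
  have := local_shell (hQ.mono hle) (hA.mono' hQ hle) (hB.mono' hQ hle) (scaled_eqn ι μ hP)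
    (bd_lp hι hμ l1) (bd_lp hι hμ l2) (bd_lp hι hμ l3) (scaled_eqn ι μ hQ1) (scaled_eqn ι μ hQ2)
    (scaled_eqn ι μ hQ3) (bd_ePos hι l4) (bd_ePos hι l5) (bd_ePos hι l6) (bd_ePos hι l7)
    (scaled_dep ι μ hdet)
  rw [map_D3, map_D3, ← exp_nat_mul] at this
  exact_mod_cast this

variable [DecidableEq K]

lemma scaled_add {L : Type} [NormedField L] (ι : K →+* L) {μ : L} (hμ0 : μ ≠ 0)
    {P T : W.toAffine.Point}
    (hP : P ≠ 0) (hT : T ≠ 0) (hne : ι (pX P) * μ ^ 2 ≠ ι (pX T) * μ ^ 2) :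
    ι (pX (P + T)) * μ ^ 2 = ((ι (pY T) * μ ^ 3 - ι (pY P) * μ ^ 3) /
      (ι (pX T) * μ ^ 2 - ι (pX P) * μ ^ 2)) ^ 2 - ι (pX T) * μ ^ 2 - ι (pX P) * μ ^ 2 ∧
    ι (pY (P + T)) * μ ^ 3 = -((ι (pY T) * μ ^ 3 - ι (pY P) * μ ^ 3) /
      (ι (pX T) * μ ^ 2 - ι (pX P) * μ ^ 2) * (ι (pX (P + T)) * μ ^ 2 - ι (pX T) * μ ^ 2) +
      ι (pY T) * μ ^ 3) := by
  have hx : pX T ≠ pX P := fun e => hne (by rw [e])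
  obtain ⟨-, h1, h2⟩ := p_add hT hP hx
  rw [add_comm T P] at h1 h2
  have e : (ι (pY T) * μ ^ 3 - ι (pY P) * μ ^ 3) / (ι (pX T) * μ ^ 2 - ι (pX P) * μ ^ 2) =
      ι ((pY T - pY P) / (pX T - pX P)) * μ := by
    rw [map_div₀, map_sub, map_sub]
    have : ι (pX T) - ι (pX P) ≠ 0 := by
      rw [← map_sub]; exact (map_ne_zero ι).mpr (sub_ne_zero.mpr hx)
    have h' : ι (pX T) * μ ^ 2 - ι (pX P) * μ ^ 2 ≠ 0 := by
      rw [← sub_mul]; exact mul_ne_zero this (pow_ne_zero _ hμ0)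
    rw [div_eq_iff h', div_mul_eq_mul_div, div_mul_eq_mul_div, eq_div_iff this]
    ring
  rw [e]
  generalize (pY T - pY P) / (pX T - pX P) = ℓ at *
  constructor
  · rw [h1]; simp only [map_sub, map_pow]; ring
  · rw [h2]; simp only [map_sub, map_neg, map_mul, map_add]; ring

lemma hp_cluster (h : LD (cA W) (cB W) D s) {P T1 T2 T3 : W.toAffine.Point} (hP : P ≠ 0)
    (hT1 : T1 ≠ 0) (hT2 : T2 ≠ 0) (hT3 : T3 ≠ 0) {k k1 k2 k3 : K}
    (hdet : Dep (pX P) (pY P) k (pX (P + T1)) (pX (P + T2)) (pX (P + T3)) (pY (P + T1))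
      (pY (P + T2)) (pY (P + T3)) k1 k2 k3)
    (hne : D3 (pX T1) (pX T2) (pX T3) k1 k2 k3 ≠ 0 ∨ D3 (pY T1) (pY T2) (pY T3) k1 k2 k3 ≠ 0) :
    hp D P ≤ 300 * (gsl s + hp D T1 + hp D T2 + hp D T3 +
      logHeight₁ k + logHeight₁ k1 + logHeight₁ k2 + logHeight₁ k3) := by
  rw [← gsl_mm]
  refine sum_step 300 h.D0 hne ?_
  intro v hv
  obtain ⟨L, _, ι, μ, hι, hμ, hQ, hA, hB, h3, hΔ⟩ := h.loc v hv
  have hμ0 : μ ≠ 0 := by rintro rfl; simp at hμ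
  refine ⟨L, inferInstance, ι, μ, hι, hμ, ?_⟩
  obtain ⟨l0, l1, l2, l3, l4, l5, l6, l7⟩ := mm_le (s := s) D (pX T1) (pX T2) (pX T3) k k1 k2 k3
    (h.s_nonneg hv)
  generalize (mm s D (pX T1) (pX T2) (pX T3) k k1 k2 k3).1 v = m at *
  have hle := exp_le_exp.mpr l0
  have := local_cluster (hQ.mono hle) (hA.mono' hQ hle) (hB.mono' hQ hle)
    (h3.trans (by gcongr)) (scaled_eqn ι μ hP)
    (bd_lp hι hμ l1) (bd_lp hι hμ l2) (bd_lp hι hμ l3) (scaled_eqn ι μ hT1) (scaled_eqn ι μ hT2)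
    (scaled_eqn ι μ hT3) (scaled_add ι hμ0 hP hT1) (scaled_add ι hμ0 hP hT2)
    (scaled_add ι hμ0 hP hT3) (bd_ePos hι l4) (bd_ePos hι l5) (bd_ePos hι l6) (bd_ePos hι l7)
    (scaled_dep ι μ hdet)
  rw [map_D3, map_D3, ← exp_nat_mul] at this
  exact_mod_cast this

end Glue2

end APB

/-! ### Sets of points with affine labels -/

namespace APB

open Height Real

section Labels

variable {K : Type} [Field K] [CharZero K]

lemma no_line {A B a1 a2 a3 a4 b1 b2 b3 b4 k1 k2 k3 k4 : K}
    (h1 : b1 ^ 2 = a1 ^ 3 + A * a1 + B) (h2 : b2 ^ 2 = a2 ^ 3 + A * a2 + B)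
    (h3 : b3 ^ 2 = a3 ^ 3 + A * a3 + B) (h4 : b4 ^ 2 = a4 ^ 3 + A * a4 + B)
    (k12 : k1 ≠ k2) (k13 : k1 ≠ k3) (k14 : k1 ≠ k4) (k23 : k2 ≠ k3) (k24 : k2 ≠ k4) (k34 : k3 ≠ k4)
    (hne : ¬ (a1 = a2 ∧ b1 = b2))
    (ea3 : D3 a1 a2 a3 k1 k2 k3 = 0) (eb3 : D3 b1 b2 b3 k1 k2 k3 = 0)
    (ea4 : D3 a1 a2 a4 k1 k2 k4 = 0) (eb4 : D3 b1 b2 b4 k1 k2 k4 = 0) : False := by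
  unfold D3 at ea3 eb3 ea4 eb4
  have d12 : k2 - k1 ≠ 0 := sub_ne_zero.mpr k12.symm
  have d13 : k3 - k1 ≠ 0 := sub_ne_zero.mpr k13.symm
  have d14 : k4 - k1 ≠ 0 := sub_ne_zero.mpr k14.symm
  obtain ⟨β, hβ⟩ : ∃ β, a2 - a1 = β * (k2 - k1) := ⟨(a2 - a1) / (k2 - k1), by field_simp⟩
  obtain ⟨δ, hδ⟩ : ∃ δ, b2 - b1 = δ * (k2 - k1) := ⟨(b2 - b1) / (k2 - k1), by field_simp⟩
  have A3 : a3 = a1 + β * (k3 - k1) := by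
    apply mul_right_cancel₀ d12; linear_combination -ea3 + (k3 - k1) * hβ
  have A4 : a4 = a1 + β * (k4 - k1) := by
    apply mul_right_cancel₀ d12; linear_combination -ea4 + (k4 - k1) * hβ
  have B3 : b3 = b1 + δ * (k3 - k1) := by
    apply mul_right_cancel₀ d12; linear_combination -eb3 + (k3 - k1) * hδ
  have B4 : b4 = b1 + δ * (k4 - k1) := by
    apply mul_right_cancel₀ d12; linear_combination -eb4 + (k4 - k1) * hδ
  have A2 : a2 = a1 + β * (k2 - k1) := by linear_combination hβ
  have B2 : b2 = b1 + δ * (k2 - k1) := by linear_combination hδ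
  have key : ∀ a b k : K, b ^ 2 = a ^ 3 + A * a + B → a = a1 + β * (k - k1) →
      b = b1 + δ * (k - k1) → k - k1 ≠ 0 →
      -β ^ 3 * (k - k1) ^ 2 + (δ ^ 2 - 3 * a1 * β ^ 2) * (k - k1) +
        (2 * b1 * δ - 3 * a1 ^ 2 * β - A * β) = 0 := by
    intro a b k h ha hb hk
    apply mul_right_cancel₀ hk
    rw [ha, hb] at h
    linear_combination h - h1
  have q2 := key _ _ _ h2 A2 B2 d12
  have q3 := key _ _ _ h3 A3 B3 d13
  have q4 := key _ _ _ h4 A4 B4 d14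
  have d23 : k3 - k2 ≠ 0 := sub_ne_zero.mpr k23.symm
  have d24 : k4 - k2 ≠ 0 := sub_ne_zero.mpr k24.symm
  have d34 : k4 - k3 ≠ 0 := sub_ne_zero.mpr k34.symm
  have r3 : -β ^ 3 * (k3 - k1 + (k2 - k1)) + (δ ^ 2 - 3 * a1 * β ^ 2) = 0 := by
    apply mul_right_cancel₀ d23; linear_combination q3 - q2
  have r4 : -β ^ 3 * (k4 - k1 + (k2 - k1)) + (δ ^ 2 - 3 * a1 * β ^ 2) = 0 := by
    apply mul_right_cancel₀ d24; linear_combination q4 - q2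
  have β0 : β = 0 := by
    have : β ^ 3 = 0 := by apply mul_right_cancel₀ d34; linear_combination r3 - r4
    exact pow_eq_zero_iff (by norm_num) |>.mp this
  have δ0 : δ = 0 := by
    have : δ ^ 2 = 0 := by rw [β0] at r3; linear_combination r3
    exact pow_eq_zero_iff (by norm_num) |>.mp this
  apply hne
  rw [A2, B2, β0, δ0]; simp

variable {W : WeierstrassCurve K}

/-- The label of a point. -/
def lab (u v w : K) (P : W.toAffine.Point) : K := u * pY P + v * pX P + w

lemma dep_lab (u v w : K) (P Q1 Q2 Q3 : W.toAffine.Point) :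
    Dep (pX P) (pY P) (lab u v w P) (pX Q1) (pX Q2) (pX Q3) (pY Q1) (pY Q2) (pY Q3)
      (lab u v w Q1) (lab u v w Q2) (lab u v w Q3) := by
  unfold Dep D3 lab; ring

lemma pick {Q1 Q2 Q3 Q4 : W.toAffine.Point} (h1 : Q1 ≠ 0) (h2 : Q2 ≠ 0) (h3 : Q3 ≠ 0)
    (h4 : Q4 ≠ 0) {k1 k2 k3 k4 : K} (k12 : k1 ≠ k2) (k13 : k1 ≠ k3) (k14 : k1 ≠ k4)
    (k23 : k2 ≠ k3) (k24 : k2 ≠ k4) (k34 : k3 ≠ k4) (h12 : Q1 ≠ Q2) :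
    (D3 (pX Q1) (pX Q2) (pX Q3) k1 k2 k3 ≠ 0 ∨ D3 (pY Q1) (pY Q2) (pY Q3) k1 k2 k3 ≠ 0) ∨
    (D3 (pX Q1) (pX Q2) (pX Q4) k1 k2 k4 ≠ 0 ∨ D3 (pY Q1) (pY Q2) (pY Q4) k1 k2 k4 ≠ 0) := by
  by_contra! hcon
  exact no_line (p_eqn h1) (p_eqn h2) (p_eqn h3) (p_eqn h4) k12 k13 k14 k23 k24 k34
    (fun h => h12 (p_ext h1 h2 h.1 h.2)) hcon.1.1 hcon.1.2 hcon.2.1 hcon.2.2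

variable [AdmissibleAbsValues K] {D : K} {s : FSm K}

lemma shell (h : LD (cA W) (cB W) D s) {u v w : K} {S : Finset W.toAffine.Point}
    (hS0 : ∀ P ∈ S, P ≠ 0) (hinj : ∀ P ∈ S, ∀ Q ∈ S, lab u v w P = lab u v w Q → P = Q) {ℓ : ℝ}
    (hℓ : ∀ P ∈ S, logHeight₁ (lab u v w P) ≤ ℓ) {c H : ℝ} (hc : gsl s ≤ c)
    {P Q1 Q2 Q3 Q4 : W.toAffine.Point} (hP : P ∈ S) (h1 : Q1 ∈ S) (h2 : Q2 ∈ S) (h3 : Q3 ∈ S)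
    (h4 : Q4 ∈ S) (h12 : Q1 ≠ Q2) (h13 : Q1 ≠ Q3) (h14 : Q1 ≠ Q4) (h23 : Q2 ≠ Q3) (h24 : Q2 ≠ Q4)
    (h34 : Q3 ≠ Q4) (H1 : hp D Q1 ≤ H) (H2 : hp D Q2 ≤ H) (H3 : hp D Q3 ≤ H) (H4 : hp D Q4 ≤ H) :
    hp D P ≤ 50 * (c + 3 * H + 4 * ℓ) := by
  have a0 := hℓ _ hP
  have a1 := hℓ _ h1
  have a2 := hℓ _ h2
  have a3 := hℓ _ h3
  have a4 := hℓ _ h4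
  have ne : ∀ {Q Q'}, Q ∈ S → Q' ∈ S → Q ≠ Q' → lab u v w Q ≠ lab u v w Q' :=
    fun hQ hQ' hne e => hne (hinj _ hQ _ hQ' e)
  rcases pick (hS0 _ h1) (hS0 _ h2) (hS0 _ h3) (hS0 _ h4) (ne h1 h2 h12) (ne h1 h3 h13)
    (ne h1 h4 h14) (ne h2 h3 h23) (ne h2 h4 h24) (ne h3 h4 h34) h12 with hh | hh
  · have := hp_shell h (hS0 _ hP) (hS0 _ h1) (hS0 _ h2) (hS0 _ h3) (dep_lab u v w P Q1 Q2 Q3) hh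
    linarith
  · have := hp_shell h (hS0 _ hP) (hS0 _ h1) (hS0 _ h2) (hS0 _ h4) (dep_lab u v w P Q1 Q2 Q4) hh
    linarith

variable [DecidableEq K]

lemma cluster (h : LD (cA W) (cB W) D s) {u v w : K} {S : Finset W.toAffine.Point}
    (hS0 : ∀ P ∈ S, P ≠ 0) (hinj : ∀ P ∈ S, ∀ Q ∈ S, lab u v w P = lab u v w Q → P = Q) {ℓ : ℝ}
    (hℓ : ∀ P ∈ S, logHeight₁ (lab u v w P) ≤ ℓ) {c H : ℝ} (hc : gsl s ≤ c)
    {P Q1 Q2 Q3 Q4 : W.toAffine.Point} (hP : P ∈ S) (h1 : Q1 ∈ S) (h2 : Q2 ∈ S) (h3 : Q3 ∈ S)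
    (h4 : Q4 ∈ S) (h01 : P ≠ Q1) (h02 : P ≠ Q2) (h03 : P ≠ Q3) (h04 : P ≠ Q4)
    (h12 : Q1 ≠ Q2) (h13 : Q1 ≠ Q3) (h14 : Q1 ≠ Q4) (h23 : Q2 ≠ Q3) (h24 : Q2 ≠ Q4)
    (h34 : Q3 ≠ Q4) (H1 : hp D (Q1 - P) ≤ H) (H2 : hp D (Q2 - P) ≤ H) (H3 : hp D (Q3 - P) ≤ H)
    (H4 : hp D (Q4 - P) ≤ H) :
    hp D P ≤ 300 * (c + 3 * H + 4 * ℓ) := by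
  have a0 := hℓ _ hP
  have a1 := hℓ _ h1
  have a2 := hℓ _ h2
  have a3 := hℓ _ h3
  have a4 := hℓ _ h4
  have ne : ∀ {Q Q'}, Q ∈ S → Q' ∈ S → Q ≠ Q' → lab u v w Q ≠ lab u v w Q' :=
    fun hQ hQ' hne e => hne (hinj _ hQ _ hQ' e)
  have t : ∀ {Q}, P ≠ Q → Q - P ≠ 0 := fun hne => sub_ne_zero.mpr hne.symm
  have e : ∀ Q, P + (Q - P) = Q := fun Q => by abel
  rcases pick (t h01) (t h02) (t h03) (t h04) (ne h1 h2 h12) (ne h1 h3 h13)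
    (ne h1 h4 h14) (ne h2 h3 h23) (ne h2 h4 h24) (ne h3 h4 h34) (fun hh => h12 (sub_left_inj.mp hh))
    with hh | hh
  · have := hp_cluster h (hS0 _ hP) (t h01) (t h02) (t h03)
      (by rw [e, e, e]; exact dep_lab u v w P Q1 Q2 Q3) hh
    linarith
  · have := hp_cluster h (hS0 _ hP) (t h01) (t h02) (t h04)
      (by rw [e, e, e]; exact dep_lab u v w P Q1 Q2 Q4) hh
    linarith

/-- Counting points of bounded height. -/
lemma count (hD : D ≠ 0) (c : ℝ) (hfin : {z : K | logHeight₁ z ≤ 6 * c}.Finite)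
    (t : Finset W.toAffine.Point) (ht : ∀ P ∈ t, hp D P ≤ c) :
    t.card ≤ 12 * hfin.toFinset.card + 1 := by
  have h1 : (t.erase 0).card ≤ 12 * hfin.toFinset.card := by
    have hX : ∀ x : K, ((t.erase 0).filter (fun P => pX P = x)).card ≤ 2 := by
      intro x
      by_contra! hcon
      obtain ⟨P, Q, R, hP, hQ, hR, hPQ, hPR, hQR⟩ := Finset.two_lt_card_iff.mp hcon
      simp only [Finset.mem_filter, Finset.mem_erase] at hP hQ hR
      rcases p_ext_or hP.1.1 hQ.1.1 (hP.2.trans hQ.2.symm) with h | h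
      · exact hPQ h
      · rcases p_ext_or hP.1.1 hR.1.1 (hP.2.trans hR.2.symm) with h' | h'
        · exact hPR h'
        · exact hQR (neg_injective (h.symm.trans h'))
    have hZ : ∀ z ∈ hfin.toFinset,
        (((t.erase 0).image pX).filter (fun x => x ^ 6 / D = z)).card ≤ 6 := by
      intro z _
      refine (Finset.card_le_card (t := (Polynomial.nthRoots 6 (z * D)).toFinset) ?_).trans ?_
      · intro x hx
        simp only [Finset.mem_filter] at hx
        rw [Multiset.mem_toFinset, Polynomial.mem_nthRoots (by norm_num), ← hx.2]
        field_simp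
      · exact (Multiset.toFinset_card_le _).trans (Polynomial.card_nthRoots 6 _)
    have c1 := Finset.card_le_mul_card_image (f := pX) (t.erase 0) 2 (fun x _ => hX x)
    have c2 := Finset.card_le_mul_card_image_of_maps_to (f := fun x : K => x ^ 6 / D)
      (s := (t.erase 0).image pX) (t := hfin.toFinset) (fun x hx => by
        obtain ⟨P, hP, rfl⟩ := Finset.mem_image.mp hx
        have := ht P (Finset.mem_of_mem_erase hP)
        rw [hp_eq] at this
        simp only [Set.Finite.mem_toFinset, Set.mem_setOf_eq]
        linarith) 6 hZ
    omega
  have := Finset.pred_card_le_card_erase (s := t) (a := 0)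
  omega

end Labels

lemma exists_small {α : Type*} [DecidableEq α] (f : α → ℝ) (n : ℕ) (S : Finset α) (hn : n ≤ S.card) :
    ∃ t ⊆ S, t.card = n ∧ ∀ p ∈ t, ∀ q ∈ S \ t, f p ≤ f q := by
  induction n with
  | zero => exact ⟨∅, by simp, by simp, by simp⟩
  | succ n ih =>
    obtain ⟨t, hts, htn, ht⟩ := ih (by omega)
    have hne : (S \ t).Nonempty := by
      rw [← Finset.card_pos, Finset.card_sdiff_of_subset hts]; omega
    obtain ⟨a, ha, hmin⟩ := Finset.exists_min_image _ f hne
    have ha' := Finset.mem_sdiff.mp ha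
    refine ⟨insert a t, Finset.insert_subset ha'.1 hts, by
      rw [Finset.card_insert_of_notMem ha'.2, htn], ?_⟩
    intro p hp q hq
    simp only [Finset.mem_sdiff, Finset.mem_insert, not_or] at hq
    rcases Finset.mem_insert.mp hp with rfl | hp
    · exact hmin q (Finset.mem_sdiff.mpr ⟨hq.1, hq.2.2⟩)
    · exact ht p hp q (Finset.mem_sdiff.mpr ⟨hq.1, hq.2.2⟩)

lemma growth (a b : ℝ) (R : ℕ) : ∃ N₀ : ℕ, ∀ N : ℕ, (N : ℝ) ≤ a * (b * (log N + 1)) ^ R + 4 →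
    N ≤ N₀ := by
  have h1 : (fun x : ℝ => (log x + 1) ^ R) =o[Filter.atTop] (id : ℝ → ℝ) := by
    have h2 := isLittleO_pow_log_id_atTop (n := R)
    have h3 : (fun x : ℝ => (log x + 1) ^ R) =O[Filter.atTop] (fun x : ℝ => log x ^ R) := by
      apply Asymptotics.IsBigO.pow
      apply Asymptotics.IsBigO.add (Asymptotics.isBigO_refl _ _)
      apply Asymptotics.IsLittleO.isBigO
      exact isLittleO_const_log_atTop
    exact h3.trans_isLittleO h2
  have h4 := (h1.const_mul_left (a * b ^ R)).bound (c := 1 / 2) (by norm_num)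
  have h5 := h4.and (Filter.eventually_gt_atTop (8 : ℝ))
  obtain ⟨x0, hx0⟩ := Filter.eventually_atTop.mp h5
  refine ⟨⌈x0⌉₊, fun N hN => ?_⟩
  by_contra! hcon
  have hx : x0 ≤ N := (Nat.le_ceil x0).trans (by exact_mod_cast hcon.le)
  obtain ⟨g1, g2⟩ := hx0 N hx
  have g3 := le_abs_self (a * b ^ R * (log N + 1) ^ R)
  rw [norm_eq_abs, id, norm_eq_abs, abs_of_pos (by linarith : (0:ℝ) < N)] at g1
  rw [mul_pow, ← mul_assoc] at hN
  linarith

end APB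

/-! ### The main counting argument -/

namespace APB

open Height Real
open scoped TensorProduct

section Main

variable {K : Type} [Field K] [CharZero K] [AdmissibleAbsValues K] [DecidableEq K]

lemma main_bound (hN : ∀ c : ℝ, {z : K | logHeight₁ z ≤ c}.Finite) (c : ℝ) (hc0 : 0 ≤ c) (R : ℕ) :
    ∃ N₀ : ℕ, ∀ (W : WeierstrassCurve K) (D : K) (s : FSm K), LD (cA W) (cB W) D s → gsl s ≤ c →
      FiniteDimensional ℚ (ℚ ⊗[ℤ] W.toAffine.Point) → grpRank W.toAffine.Point ≤ R →
      ∀ (S : Finset W.toAffine.Point) (u v w : K), (∀ P ∈ S, P ≠ 0) →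
        (∀ P ∈ S, ∀ Q ∈ S, lab u v w P = lab u v w Q → P = Q) →
        (∀ P ∈ S, logHeight₁ (lab u v w P) ≤ log S.card) → S.card ≤ N₀ := by
  classical
  -- constants
  obtain ⟨m0, hm0⟩ : ∃ m0 : ℕ, m0 = 12 * (hN (6 * (1 + 100 * c))).toFinset.card + 1 := ⟨_, rfl⟩
  obtain ⟨Kc, hKc⟩ : ∃ Kc : ℝ, Kc = 1000000 := ⟨_, rfl⟩
  obtain ⟨C1, hC1⟩ : ∃ C1 : ℝ, C1 = 400 * (Kc + 1) * (c + 1) := ⟨_, rfl⟩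
  obtain ⟨N1, hN1⟩ := growth m0 (2 * R * C1 + 5) R
  obtain ⟨kB, hkB⟩ : ∃ kB : ℕ, kB = 2000000 * (R + 1) := ⟨_, rfl⟩
  refine ⟨max (max N1 4) (4 + 4 * (2 * kB + 1) ^ R), ?_⟩
  intro W D s hLD hs hfd hR S u v w hS0 hinj hℓ
  by_contra! hcon
  rw [max_lt_iff, max_lt_iff] at hcon
  obtain ⟨⟨hNN1, hN4⟩, hNB⟩ := hcon
  set N := S.card with hNdef
  set ℓ := log (N : ℝ) with hℓdef
  have hℓ0 : 0 ≤ ℓ := log_natCast_nonneg N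
  obtain ⟨t4, ht4S, ht4c, ht4⟩ := exists_small (hp D) 4 S hN4.le
  obtain ⟨q, hq, hqmax⟩ := Finset.exists_max_image t4 (hp D) (by rw [← Finset.card_pos]; omega)
  set H := hp D q with hH
  have hH0 : 0 ≤ H := hp_nonneg D q
  obtain ⟨Q1, Q2, Q3, Q4, h12, h13, h14, h23, h24, h34, ht4e⟩ := Finset.card_eq_four.mp ht4c
  have m1 : Q1 ∈ t4 := by simp [ht4e]
  have m2 : Q2 ∈ t4 := by simp [ht4e]
  have m3 : Q3 ∈ t4 := by simp [ht4e]
  have m4 : Q4 ∈ t4 := by simp [ht4e]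
  have hup : ∀ P ∈ S, hp D P ≤ 50 * (c + 3 * H + 4 * ℓ) := fun P hP =>
    shell hLD hS0 hinj hℓ hs hP (ht4S m1) (ht4S m2) (ht4S m3) (ht4S m4) h12 h13 h14 h23 h24 h34
      (hqmax _ m1) (hqmax _ m2) (hqmax _ m3) (hqmax _ m4)
  have hlow : ∀ P ∈ S \ t4, H ≤ hp D P := fun P hP => ht4 q hq P hP
  have hcard : (S \ t4).card = N - 4 := by rw [Finset.card_sdiff_of_subset ht4S, ht4c]
  have hpar : ∀ x y : W.toAffine.Point,
      |hp D (x + y) + hp D (x - y) - 2 * (hp D x + hp D y)| ≤ 100 * c := fun x y =>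
    (hp_par hLD x y).trans (by linarith)
  obtain ⟨E, hE⟩ : ∃ E : ℝ, E = 50 * (c + 3 * H + 4 * ℓ) + 100 * c + 1 := ⟨_, rfl⟩
  have hE0 : 0 < E := by rw [hE]; positivity
  have hpack := packing (hp D) (100 * c) hpar (hp_nonneg D) R hR (S \ t4) E hE0
    (fun g hg => by
      have := hup g (Finset.mem_sdiff.mp hg).1
      rw [hE]; linarith)
  rcases le_or_gt H (Kc * (ℓ + 1 + c)) with hcase | hcase
  · -- Case A
    have hEC : E ≤ C1 * (ℓ + 1) := by
      rw [hE, hC1, hKc]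
      rw [hKc] at hcase
      nlinarith [mul_nonneg hc0 hℓ0]
    obtain ⟨k, hk⟩ : ∃ k : ℕ, k = ⌈R * E⌉₊ + 1 := ⟨_, rfl⟩
    have hk1 : (R : ℝ) * E ≤ k := by
      rw [hk]; push_cast
      have := Nat.le_ceil (R * E)
      linarith
    have hk2 : (k : ℝ) ≤ R * E + 2 := by
      rw [hk]; push_cast
      have := (Nat.ceil_lt_add_one (by positivity : 0 ≤ R * E)).le
      linarith
    have hkpos : 0 < k := by omega
    have hk1' : (1 : ℝ) ≤ k := by exact_mod_cast hkpos
    have hbig : m0 * (2 * k + 1) ^ R < (S \ t4).card := by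
      by_contra! hle
      rw [hcard] at hle
      have : N ≤ N1 := by
        apply hN1
        have h1 : (N : ℝ) ≤ m0 * (2 * k + 1) ^ R + 4 := by
          have : N ≤ m0 * (2 * k + 1) ^ R + 4 := by omega
          exact_mod_cast this
        refine h1.trans ?_
        gcongr
        have hRE : (R : ℝ) * E ≤ R * (C1 * (ℓ + 1)) := by gcongr
        nlinarith
      omega
    obtain ⟨t, hts, htc, ht⟩ := hpack k m0 hkpos hbig
    have htne : t.Nonempty := by rw [← Finset.card_pos]; omega
    obtain ⟨g0, hg0⟩ := htne
    have hsmall : ∀ g ∈ t, hp D (g - g0) ≤ 1 + 100 * c := by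
      intro g hg
      refine (ht g hg g0 hg0).trans ?_
      gcongr
      rw [div_le_one (by positivity)]
      nlinarith
    have := count hLD.D0 (1 + 100 * c) (hN _) (t.image (fun g => g - g0)) (by
      intro P hP
      obtain ⟨g, hg, rfl⟩ := Finset.mem_image.mp hP
      exact hsmall g hg)
    rw [Finset.card_image_of_injective _ (sub_left_injective), ← hm0] at this
    omega
  · -- Case B
    have hbig : 4 * (2 * kB + 1) ^ R < (S \ t4).card := by
      rw [hcard]; omega
    obtain ⟨t, hts, htc, ht⟩ := hpack kB 4 (by omega) hbig
    obtain ⟨t', ht't, ht'c⟩ := Finset.exists_subset_card_eq (show 5 ≤ t.card by omega)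
    obtain ⟨P, hP⟩ : t'.Nonempty := by rw [← Finset.card_pos]; omega
    have hc4 : (t'.erase P).card = 4 := by rw [Finset.card_erase_of_mem hP, ht'c]
    obtain ⟨A1, A2, A3, A4, g12, g13, g14, g23, g24, g34, hAe⟩ := Finset.card_eq_four.mp hc4
    have n1 : A1 ∈ t'.erase P := by simp [hAe]
    have n2 : A2 ∈ t'.erase P := by simp [hAe]
    have n3 : A3 ∈ t'.erase P := by simp [hAe]
    have n4 : A4 ∈ t'.erase P := by simp [hAe]
    have sub : ∀ {A}, A ∈ t'.erase P → A ∈ S := fun hA =>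
      (Finset.mem_sdiff.mp (hts (ht't (Finset.mem_of_mem_erase hA)))).1
    have hPS := hts (ht't hP)
    have dist : ∀ {A}, A ∈ t'.erase P → hp D (A - P) ≤ R * E / kB ^ 2 + 100 * c := fun hA =>
      ht _ (ht't (Finset.mem_of_mem_erase hA)) _ (ht't hP)
    have neP : ∀ {A}, A ∈ t'.erase P → P ≠ A := fun hA => (Finset.ne_of_mem_erase hA).symm
    have hcl := cluster hLD hS0 hinj hℓ hs (Finset.mem_sdiff.mp hPS).1 (sub n1) (sub n2) (sub n3)
      (sub n4) (neP n1) (neP n2) (neP n3) (neP n4) g12 g13 g14 g23 g24 g34 (dist n1) (dist n2)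
      (dist n3) (dist n4)
    have hlo := hlow P hPS
    rw [hKc] at hcase
    have hEH : E ≤ 500 * H := by rw [hE]; linarith
    have hkR : (R : ℝ) * E / kB ^ 2 ≤ H / 2400 := by
      rw [hkB]
      push_cast
      have hR0 : (0 : ℝ) ≤ R := Nat.cast_nonneg R
      rw [div_le_div_iff₀ (by positivity) (by norm_num)]
      have : (R : ℝ) * E ≤ R * (500 * H) := by gcongr
      nlinarith [mul_nonneg hR0 hH0, mul_nonneg (mul_nonneg hR0 hR0) hH0]
    linarith

end Main

end APB

/-! ### Local data for elliptic curves over number fields -/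

namespace APB

open Height Real

section Local

lemma exists_ext_nonarch {K : Type} [Field K] (v : AbsoluteValue K ℝ) (hna : ∀ x y, v (x + y) ≤ max (v x) (v y))
    (hnt : ∃ x, 1 < v x) :
    ∃ (L : Type) (_ : NormedField L) (ι : K →+* L), IsAlgClosed L ∧ (∀ x, ‖ι x‖ = v x) ∧
      ∀ a b : L, ‖a + b‖ ≤ max ‖a‖ ‖b‖ := by
  let C := v.Completion
  have hC : ∀ x : K, ‖((WithAbs.toAbs v x : WithAbs v) : C)‖ = v x := fun x => by
    rw [UniformSpace.Completion.norm_coe, WithAbs.norm_toAbs_eq]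
  have hadd : ∀ a b : C, ‖a + b‖ ≤ max ‖a‖ ‖b‖ := by
    intro a b
    refine UniformSpace.Completion.induction_on₂ a b ?_ ?_
    · exact isClosed_le (by fun_prop) (by fun_prop)
    · intro x y
      have h : ∀ z : WithAbs v, ‖(z : C)‖ = v z.ofAbs := fun z => hC z.ofAbs
      rw [← UniformSpace.Completion.coe_add, h, h, h]
      exact hna _ _
  letI : NontriviallyNormedField C :=
    { (inferInstance : NormedField C) with
      non_trivial := by
        obtain ⟨x, hx⟩ := hnt
        exact ⟨_, by rw [hC x]; exact hx⟩ }
  haveI : IsUltrametricDist C := IsUltrametricDist.isUltrametricDist_of_forall_norm_add_le_max_norm hadd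
  let L := AlgebraicClosure C
  letI nf : NormedField L := spectralNorm.normedField C L
  refine ⟨L, nf, ((algebraMap C L).comp UniformSpace.Completion.coeRingHom).comp (WithAbs.equiv v).symm.toRingHom, ?_, ?_, ?_⟩
  · exact (inferInstance : IsAlgClosed (AlgebraicClosure C))
  · intro x
    rw [← hC x]
    exact spectralNorm_extends (K := C) (L := L) _
  · intro a b
    exact isNonarchimedean_spectralNorm (K := C) (L := L) a b

variable {K : Type} [Field K] [NumberField K]

lemma finitePlace_nontriv {v : AbsoluteValue K ℝ} (hv : NumberField.IsFinitePlace v) : ∃ x, 1 < v x := by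
  obtain ⟨p, rfl⟩ := hv
  obtain ⟨x, hx, hx0⟩ := Submodule.exists_mem_ne_zero_of_ne_bot p.ne_bot
  refine ⟨(algebraMap _ K x)⁻¹, ?_⟩
  have h1 := (NumberField.FinitePlace.norm_lt_one_iff_mem (K := K) p x).2 hx
  rw [map_inv₀]
  refine (one_lt_inv₀ ?_).2 h1
  exact AbsoluteValue.pos _ (by simpa using hx0)

open Classical in
variable (K) in
/-- The function `log 2` on archimedean places. -/
noncomputable def arcF : FSm K :=
  ⟨fun v => if v ∈ AdmissibleAbsValues.nonarchAbsVal (K := K) then 0 else log 2, by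
    have : (fun v : AdmissibleAbsValues.nonarchAbsVal (K := K) =>
      (fun v => if v ∈ AdmissibleAbsValues.nonarchAbsVal (K := K) then (0 : ℝ) else log 2) v.val) = 0 := by
      funext v; simp
    change (Function.support _).Finite
    rw [this]; simp⟩

lemma exists_local {v : AbsoluteValue K ℝ} (hv : IsPl v) :
    ∃ (L : Type) (_ : NormedField L) (ι : K →+* L), IsAlgClosed L ∧ (∀ x, ‖ι x‖ = v x) ∧
      QT L (exp ((arcF K).1 v)) := by
  by_cases h : v ∈ AdmissibleAbsValues.nonarchAbsVal (K := K)
  · obtain ⟨L, nf, ι, h1, h2, h3⟩ := exists_ext_nonarch v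
      (AdmissibleAbsValues.isNonarchimedean v h) (finitePlace_nontriv h)
    refine ⟨L, nf, ι, h1, h2, ?_⟩
    simp only [arcF, h, if_true, exp_zero]
    exact ⟨le_rfl, by simpa using h3⟩
  · have h' := hv.resolve_right h
    have h'' : NumberField.IsInfinitePlace v := NumberField.mem_multisetInfinitePlace.1 h'
    obtain ⟨φ, hφ⟩ := h''
    refine ⟨ℂ, inferInstance, φ, inferInstance, fun x => by rw [← hφ]; rfl, ?_⟩
    simp only [arcF, h, if_false]
    rw [exp_log (by norm_num)]
    refine ⟨by norm_num, fun a b => (norm_add_le a b).trans ?_⟩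
    have := le_max_left ‖a‖ ‖b‖
    have := le_max_right ‖a‖ ‖b‖
    linarith

/-- The error function, depending only on `j`. -/
noncomputable def sJ (j : K) : FSm K :=
  arcF K + ePos (1 / 3) + ePos (-j / 110592) + ePos ((j - 1728) / 746496)

lemma QT.mono' {L : Type} [NormedField L] {M M' : ℝ} (h : QT L M) (hM : M ≤ M') : QT L M' :=
  ⟨h.1.trans hM, fun a b => (h.2 a b).trans (by gcongr)⟩

lemma LD_of (W : WeierstrassCurve K) [W.IsElliptic] : LD (cA W) (cB W) W.Δ (sJ W.j) := by
  have hD : W.Δ ≠ 0 := W.isUnit_Δ.ne_zero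
  have hj : W.j * W.Δ = W.c₄ ^ 3 := by
    rw [WeierstrassCurve.j, ← WeierstrassCurve.coe_Δ']
    rw [mul_right_comm, Units.inv_mul, one_mul]
  have hA : cA W ^ 3 = (-W.j / 110592) * W.Δ := by
    rw [cA, div_pow]
    linear_combination (-1 / 110592) * hj.symm
  have hB : cB W ^ 2 = ((W.j - 1728) / 746496) * W.Δ := by
    have := W.c_relation
    rw [cB]
    linear_combination (1 / 746496) * hj.symm - (-this) / 746496
  refine ⟨hD, fun v hv => ?_⟩
  obtain ⟨L, nf, ι, hL, hι, hQ⟩ := exists_local hv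
  obtain ⟨lam, hlam⟩ := IsAlgClosed.exists_pow_nat_eq (ι W.Δ) (n := 12) (by norm_num)
  have hιD : ι W.Δ ≠ 0 := by simpa using hD
  have hl0 : lam ≠ 0 := by rintro rfl; exact hιD (by rw [← hlam]; norm_num)
  have hμ : lam⁻¹ ^ 12 * ι W.Δ = 1 := by rw [← hlam]; field_simp
  have key : ∀ z : K, 0 ≤ (ePos z).1 v ∧ v z ≤ exp ((ePos z).1 v) := by
    intro z
    refine ⟨posLog_nonneg, ?_⟩
    rcases (AbsoluteValue.nonneg v z).eq_or_lt with h0 | h0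
    · rw [← h0]; positivity
    · calc v z = exp (log (v z)) := (exp_log h0).symm
        _ ≤ _ := exp_le_exp.2 (le_max_right _ _)
  have harc : 0 ≤ (arcF K).1 v := by
    simp only [arcF]; split_ifs
    · exact le_rfl
    · exact log_nonneg (by norm_num)
  have k1 := key (1 / 3)
  have k2 := key (-W.j / 110592)
  have k3 := key ((W.j - 1728) / 746496)
  have hs : (sJ W.j).1 v = (arcF K).1 v + (ePos (1 / 3)).1 v + (ePos (-W.j / 110592)).1 v
    + (ePos ((W.j - 1728) / 746496)).1 v := rfl
  have e0 : (arcF K).1 v ≤ (sJ W.j).1 v := by linarith [k1.1, k2.1, k3.1]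
  have e1 : v (1 / 3) ≤ exp ((sJ W.j).1 v) := k1.2.trans (exp_le_exp.2 (by linarith [k1.1, k2.1, k3.1]))
  have e2 : v (-W.j / 110592) ≤ exp ((sJ W.j).1 v) :=
    k2.2.trans (exp_le_exp.2 (by linarith [k1.1, k2.1, k3.1]))
  have e3 : v ((W.j - 1728) / 746496) ≤ exp ((sJ W.j).1 v) :=
    k3.2.trans (exp_le_exp.2 (by linarith [k1.1, k2.1, k3.1]))
  have hQ' := hQ.mono' (exp_le_exp.2 e0)
  generalize exp ((sJ W.j).1 v) = M at *
  have hM := hQ'.1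
  have root : ∀ (z : L) (n : ℕ), n ≠ 0 → ‖z ^ n‖ ≤ M → ‖z‖ ≤ M := by
    intro z n hn h
    by_contra! hc
    have h1 : 1 ≤ ‖z‖ := by linarith
    have := le_self_pow₀ h1 hn
    rw [norm_pow] at h
    linarith
  refine ⟨L, nf, ι, lam⁻¹, hι, hμ, hQ', ?_, ?_, ?_, ?_⟩
  · rw [Bd, pow_one]
    refine root _ 3 (by norm_num) ?_
    have : (ι (cA W) * lam⁻¹ ^ 4) ^ 3 = ι (-W.j / 110592) := by
      calc _ = ι (cA W ^ 3) * lam⁻¹ ^ 12 := by rw [map_pow]; ring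
        _ = ι (-W.j / 110592) * (lam⁻¹ ^ 12 * ι W.Δ) := by rw [hA, map_mul]; ring
        _ = _ := by rw [hμ, mul_one]
    rw [this, hι]; exact e2
  · rw [Bd, pow_one]
    refine root _ 2 (by norm_num) ?_
    have : (ι (cB W) * lam⁻¹ ^ 6) ^ 2 = ι ((W.j - 1728) / 746496) := by
      calc _ = ι (cB W ^ 2) * lam⁻¹ ^ 12 := by rw [map_pow]; ring
        _ = ι ((W.j - 1728) / 746496) * (lam⁻¹ ^ 12 * ι W.Δ) := by rw [hB, map_mul]; ring
        _ = _ := by rw [hμ, mul_one]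
    rw [this, hι]; exact e3
  · have h3 : (3 : L) = ι 3 := (map_ofNat ι 3).symm
    rw [h3, hι]
    calc (1 : ℝ) = v (1 / 3) * v 3 := by rw [← map_mul]; norm_num
      _ ≤ _ := by gcongr
  · have : 4 * (4 * (ι (cA W) * lam⁻¹ ^ 4) ^ 3 + 27 * (ι (cB W) * lam⁻¹ ^ 6) ^ 2) = ι (-1 / 4) := by
      have hd := disc_eq W
      have : 4 * (4 * cA W ^ 3 + 27 * cB W ^ 2) = (-1 / 4) * W.Δ := by rw [hd]; ring
      calc _ = ι (4 * (4 * cA W ^ 3 + 27 * cB W ^ 2)) * lam⁻¹ ^ 12 := by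
            simp only [map_mul, map_add, map_pow, map_ofNat]; ring
        _ = ι (-1 / 4) * (lam⁻¹ ^ 12 * ι W.Δ) := by rw [this, map_mul]; ring
        _ = _ := by rw [hμ, mul_one]
    rw [this, hι]
    have h2 : v 2 ≤ M := by
      have := hQ'.2 (ι 1) (ι 1)
      rw [← map_add, hι, hι, map_one] at this
      norm_num at this
      exact this
    have h4 : v 2 ^ 2 * v (-1 / 4) = 1 := by
      rw [← map_pow, ← map_mul]; norm_num
    calc (1 : ℝ) = v 2 ^ 2 * v (-1 / 4) := h4.symm
      _ ≤ M ^ 2 * v (-1 / 4) := by gcongr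
      _ ≤ M ^ 10 * v (-1 / 4) := by gcongr; norm_num

end Local
end APB

/-! ### Finiteness of the group of elements even outside a finite set of primes, modulo squares -/

namespace APB

open scoped nonZeroDivisors NumberField
open IsDedekindDomain

section Selmer

variable {R : Type} [CommRing R] [IsDedekindDomain R]

lemma exists_sqfree (I : Ideal R) (hI : I ≠ 0) :
    ∃ s j : Ideal R, I = s * j ^ 2 ∧ Squarefree s := by
  induction I using UniqueFactorizationMonoid.induction_on_prime with
  | h₁ => exact absurd rfl hI
  | h₂ x hx => exact ⟨x, 1, by rw [one_pow, mul_one], hx.squarefree⟩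
  | h₃ a p ha hp ih =>
    obtain ⟨s, j, rfl, hs⟩ := ih ha
    by_cases hps : p ∣ s
    · obtain ⟨t, rfl⟩ := hps
      exact ⟨t, p * j, by ring, hs.of_mul_right⟩
    · refine ⟨p * s, j, by ring, ?_⟩
      rw [squarefree_mul_iff]
      refine ⟨?_, hp.irreducible.squarefree, hs⟩
      exact (hp.irreducible.isRelPrime_iff_not_dvd).2 hps

lemma odd_val {K : Type} [Field K] [Algebra R K] [IsFractionRing R K] {r : R} (hr : r ≠ 0) {s j : Ideal R}
    (h : Ideal.span {r} = s * j ^ 2) (hs : Squarefree s) (p : HeightOneSpectrum R) (hp : p.asIdeal ∣ s) :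
    ¬ IsSquare (p.valuation K (algebraMap R K r)) := by
  have hpp : Prime p.asIdeal := p.prime
  have hI : Ideal.span {r} ≠ 0 := by simpa using hr
  have hj : j ≠ 0 := by rintro rfl; exact hI (by rw [h]; simp)
  obtain ⟨k, j', hj', rfl⟩ := (FiniteMultiplicity.of_prime_left hpp hj).exists_eq_pow_mul_and_not_dvd |>.imp
    (fun _ h => h) |> fun h => (⟨_, h.choose, h.choose_spec.2, h.choose_spec.1⟩ :
      ∃ k j', ¬ p.asIdeal ∣ j' ∧ j = p.asIdeal ^ k * j')
  obtain ⟨s', rfl⟩ := hp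
  have hs' : ¬ p.asIdeal ∣ s' := by
    rintro ⟨t, rfl⟩
    exact hpp.not_isUnit (hs p.asIdeal ⟨t, by ring⟩)
  have e : Ideal.span {r} = p.asIdeal ^ (2 * k + 1) * (s' * j' ^ 2) := by rw [h]; ring
  have hn : ¬ p.asIdeal ∣ s' * j' ^ 2 := by
    intro h
    rcases hpp.dvd_or_dvd h with h | h
    · exact hs' h
    · exact hj' (hpp.dvd_of_dvd_pow h)
  have h1 : p.intValuation r ≤ WithZero.exp (-((2 * k + 1 : ℕ) : ℤ)) :=
    (p.intValuation_le_pow_iff_dvd r _).2 ⟨_, e⟩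
  have h2 : ¬ p.intValuation r ≤ WithZero.exp (-((2 * k + 1 + 1 : ℕ) : ℤ)) := by
    rw [p.intValuation_le_pow_iff_dvd r, e, pow_succ]
    intro h
    exact hn ((mul_dvd_mul_iff_left (pow_ne_zero _ hpp.ne_zero)).1 h)
  rw [HeightOneSpectrum.valuation_of_algebraMap]
  rintro ⟨z, hz⟩
  rw [hz] at h1 h2
  have hz0 : z ≠ 0 := by rintro rfl; exact h2 (by simp)
  rw [← WithZero.exp_log hz0, ← WithZero.exp_add, WithZero.exp_le_exp] at h1 h2
  push_cast at h1 h2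
  omega

lemma sqfree_dvd {s m : Ideal R} (hm : m ≠ 0) (hs : Squarefree s)
    (h : ∀ p : HeightOneSpectrum R, p.asIdeal ∣ s → p.asIdeal ∣ m) : s ∣ m := by
  classical
  have hs0 : s ≠ 0 := hs.ne_zero
  rw [UniqueFactorizationMonoid.dvd_iff_normalizedFactors_le_normalizedFactors hs0 hm]
  rw [Multiset.le_iff_subset ((UniqueFactorizationMonoid.squarefree_iff_nodup_normalizedFactors hs0).1 hs)]
  intro q hq
  have hqp := UniqueFactorizationMonoid.prime_of_normalized_factor q hq
  have hqd := UniqueFactorizationMonoid.dvd_of_mem_normalizedFactors hq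
  have := h ⟨q, Ideal.isPrime_of_prime hqp, hqp.ne_zero⟩ hqd
  exact (Ideal.mem_normalizedFactors_iff hm).2 ⟨Ideal.isPrime_of_prime hqp, Ideal.dvd_iff_le.1 this⟩

variable {K : Type} [Field K] [NumberField K]

lemma units_sq : ∃ (ι : Type) (_ : Finite ι) (g : (𝓞 K)ˣ → ι), ∀ x y, g x = g y → ∃ z, x = y * z ^ 2 := by
  let H := (powMonoidHom 2 : (𝓞 K)ˣ →* (𝓞 K)ˣ).range
  refine ⟨(𝓞 K)ˣ ⧸ H, ?_, fun x => (x : (𝓞 K)ˣ ⧸ H), ?_⟩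
  · have : Group.FG (𝓞 K)ˣ := Group.fg_iff_monoid_fg.2 inferInstance
    have : Group.FG ((𝓞 K)ˣ ⧸ H) := QuotientGroup.fg H
    apply CommGroup.finite_of_fg_isMulTorsion
    intro x
    induction x using QuotientGroup.induction_on with
    | H z =>
      rw [isOfFinOrder_iff_pow_eq_one]
      refine ⟨2, by norm_num, ?_⟩
      rw [← QuotientGroup.mk_pow, QuotientGroup.eq_one_iff]
      exact ⟨z, rfl⟩
  · intro x y h
    have := QuotientGroup.eq.1 h.symm
    obtain ⟨z, hz⟩ := this
    exact ⟨z, by simp only [powMonoidHom_apply] at hz; rw [hz]; simp⟩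

/-- `x` has even valuation outside `m`. -/
def EvenOut (m : Ideal (𝓞 K)) (x : K) : Prop :=
  x ≠ 0 ∧ ∀ p : HeightOneSpectrum (𝓞 K), ¬ p.asIdeal ∣ m → IsSquare (p.valuation K x)

lemma evenOut_decomp {m : Ideal (𝓞 K)} (hm : m ≠ 0) {x : K} (hx : EvenOut m x) :
    ∃ (r b : 𝓞 K) (s j : Ideal (𝓞 K)), r ≠ 0 ∧ b ≠ 0 ∧ x * (algebraMap (𝓞 K) K b) ^ 2 = algebraMap (𝓞 K) K r ∧
      Ideal.span {r} = s * j ^ 2 ∧ s ∣ m ∧ j ≠ 0 := by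
  obtain ⟨a, b, hb, rfl⟩ := IsFractionRing.div_surjective (A := 𝓞 K) x
  have hb0 : b ≠ 0 := nonZeroDivisors.ne_zero hb
  have hbK : algebraMap (𝓞 K) K b ≠ 0 := by simpa using hb0
  have ha0 : a ≠ 0 := by rintro rfl; exact hx.1 (by simp)
  have hr : a * b ≠ 0 := mul_ne_zero ha0 hb0
  obtain ⟨s, j, h, hs⟩ := exists_sqfree (Ideal.span {a * b}) (by simpa using hr)
  have e : (algebraMap (𝓞 K) K a / algebraMap (𝓞 K) K b) * (algebraMap (𝓞 K) K b) ^ 2 = algebraMap (𝓞 K) K (a * b) := by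
    rw [map_mul]
    field_simp
  refine ⟨a * b, b, s, j, hr, hb0, e, h, ?_, ?_⟩
  · refine sqfree_dvd hm hs fun p hp => ?_
    by_contra hpm
    refine odd_val (K := K) hr h hs p hp ?_
    rw [← e, map_mul, map_pow]
    exact (hx.2 p hpm).mul (IsSquare.sq _)
  · rintro rfl
    have : Ideal.span {a * b} = (0 : Ideal (𝓞 K)) := by rw [h]; simp
    exact hr (by simpa using this)

lemma exists_class (m : Ideal (𝓞 K)) (hm : m ≠ 0) :
    ∃ (ι : Type) (_ : Finite ι) (g : K → ι), ∀ x y, EvenOut m x → EvenOut m y → g x = g y →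
      ∃ z : K, x = y * z ^ 2 := by
  classical
  obtain ⟨ι, hι, gu, hgu⟩ := units_sq (K := K)
  -- first invariant
  have step1 : ∃ (ι₁ : Type) (_ : Finite ι₁) (g : K → ι₁), ∀ x y, EvenOut m x → EvenOut m y → g x = g y →
      ∃ (u : (𝓞 K)ˣ) (z : K), x = y * algebraMap (𝓞 K) K (u : 𝓞 K) * z ^ 2 := by
    have := UniqueFactorizationMonoid.fintypeSubtypeDvd m hm
    choose! r b s j h1 h2 h3 h4 h5 h6 using fun x (hx : EvenOut m x) => evenOut_decomp hm hx
    refine ⟨Option ({s // s ∣ m} × ClassGroup (𝓞 K)), inferInstance, fun x =>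
      if hx : EvenOut m x then some (⟨s x, h5 x hx⟩, ClassGroup.mk0 ⟨j x, mem_nonZeroDivisors_of_ne_zero (h6 x hx)⟩)
        else none, ?_⟩
    intro x y hx hy h
    simp only [hx, hy, dif_pos, Option.some.injEq, Prod.mk.injEq, Subtype.mk.injEq] at h
    obtain ⟨hs, hc⟩ := h
    obtain ⟨c, d, hc0, hd0, hcd⟩ := ClassGroup.mk0_eq_mk0_iff.1 hc
    simp only at hcd
    have key : Ideal.span {r x * c ^ 2} = Ideal.span {r y * d ^ 2} := by
      rw [← Ideal.span_singleton_mul_span_singleton, ← Ideal.span_singleton_mul_span_singleton,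
        h4 x hx, h4 y hy, hs, ← Ideal.span_singleton_pow, ← Ideal.span_singleton_pow, mul_assoc, mul_assoc,
        ← mul_pow, ← mul_pow, mul_comm (j x), mul_comm (j y), hcd]
    rw [Ideal.span_singleton_eq_span_singleton] at key
    obtain ⟨u, hu⟩ := key.symm
    have hu' := congrArg (algebraMap (𝓞 K) K) hu
    simp only [map_mul, map_pow] at hu'
    have hbx : algebraMap (𝓞 K) K (b x) ≠ 0 := by simpa using h2 x hx
    have hby : algebraMap (𝓞 K) K (b y) ≠ 0 := by simpa using h2 y hy
    have hcK : algebraMap (𝓞 K) K (c) ≠ 0 := by simpa using hc0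
    refine ⟨u, (algebraMap (𝓞 K) K (b y) * algebraMap (𝓞 K) K d) / (algebraMap (𝓞 K) K (b x) * algebraMap (𝓞 K) K c), ?_⟩
    rw [← h3 x hx, ← h3 y hy] at hu'
    field_simp
    linear_combination -hu'
  obtain ⟨ι₁, _, g, hg⟩ := step1
  choose! rep hrep using fun (c : ι₁) (h : ∃ y, EvenOut m y ∧ g y = c) => h
  choose! u z hu using fun x (hx : EvenOut m x) =>
    hg x (rep (g x)) hx (hrep (g x) ⟨x, hx, rfl⟩).1 (hrep (g x) ⟨x, hx, rfl⟩).2.symm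
  refine ⟨ι₁ × ι, inferInstance, fun x => (g x, gu (u x)), ?_⟩
  intro x y hx hy h
  simp only [Prod.mk.injEq] at h
  obtain ⟨w, hw⟩ := hgu _ _ h.2
  have hz : z y ≠ 0 := by
    intro h0
    have := hu y hy
    rw [h0] at this
    exact hy.1 (by simpa using this)
  refine ⟨algebraMap (𝓞 K) K (w : 𝓞 K) * z x / z y, ?_⟩
  have ex := hu x hx
  have ey := hu y hy
  rw [h.1, hw] at ex
  simp only [Units.val_mul, Units.val_pow_eq_pow_val, map_mul, map_pow] at ex
  rw [div_pow, mul_div_assoc', eq_div_iff (pow_ne_zero 2 hz)]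
  linear_combination (z y) ^ 2 * ex - (algebraMap (𝓞 K) K (w : 𝓞 K) * z x) ^ 2 * ey

end Selmer
end APB

/-! ### The weak Mordell-Weil theorem with full 2-torsion -/

namespace APB

open scoped nonZeroDivisors NumberField
open IsDedekindDomain

section Weak

variable {K : Type} [Field K] [CharZero K] [DecidableEq K] {W : WeierstrassCurve K} [W.IsElliptic]

/-- The roots of the cubic. -/
structure Roots (W : WeierstrassCurve K) (e₁ e₂ e₃ : K) : Prop where
  sum : e₁ + e₂ + e₃ = 0
  hA : cA W = e₁ * e₂ + e₁ * e₃ + e₂ * e₃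
  hB : cB W = -(e₁ * e₂ * e₃)
  n12 : e₁ ≠ e₂
  n13 : e₁ ≠ e₃
  n23 : e₂ ≠ e₃

variable {e₁ e₂ e₃ : K}

lemma halving (h : Roots W e₁ e₂ e₃) {P : W.toAffine.Point} (hP : P ≠ 0) {r₁ r₂ r₃ : K}
    (h1 : pX P - e₁ = r₁ ^ 2) (h2 : pX P - e₂ = r₂ ^ 2) (h3 : pX P - e₃ = r₃ ^ 2) :
    ∃ T : W.toAffine.Point, P = T + T := by
  have hY := p_eqn hP
  have hY2 : pY P ^ 2 = (r₁ * r₂ * r₃) ^ 2 := by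
    rw [hY, mul_pow, mul_pow, ← h1, ← h2, ← h3, h.hA, h.hB]
    linear_combination (-pX P ^ 2) * (- h.sum)
  obtain ⟨r, hr, hrY⟩ : ∃ r, pX P - e₁ = r ^ 2 ∧ pY P = r * r₂ * r₃ := by
    rcases sq_eq_sq_iff_eq_or_eq_neg.mp hY2 with hh | hh
    · exact ⟨r₁, h1, hh⟩
    · exact ⟨-r₁, by rw [h1]; ring, by rw [hh]; ring⟩
  clear h1 hY2
  have q12 : r + r₂ ≠ 0 := fun h0 => h.n12 (by linear_combination -hr + h2 - (r - r₂) * h0)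
  have q13 : r + r₃ ≠ 0 := fun h0 => h.n13 (by linear_combination -hr + h3 - (r - r₃) * h0)
  have q23 : r₂ + r₃ ≠ 0 := fun h0 => h.n23 (by linear_combination -h2 + h3 - (r₂ - r₃) * h0)
  have E1 : e₁ = pX P - r ^ 2 := by linear_combination -hr
  have E2 : e₂ = pX P - r₂ ^ 2 := by linear_combination -h2
  have E3 : e₃ = pX P - r₃ ^ 2 := by linear_combination -h3
  have hs := h.sum
  have hA := h.hA
  have hB := h.hB
  rw [E1, E2, E3] at hs hA hB
  have hX : pX P = (r ^ 2 + r₂ ^ 2 + r₃ ^ 2) / 3 := by linear_combination hs / 3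
  obtain ⟨T, hT, hTX, hTY⟩ := p_exists (W := W) (X := pX P + r * r₂ + r * r₃ + r₂ * r₃)
    (Y := (r + r₂) * (r + r₃) * (r₂ + r₃)) (by rw [hA, hB, hX]; ring)
  have hTY0 : pY T ≠ 0 := by rw [hTY]; exact mul_ne_zero (mul_ne_zero q12 q13) q23
  obtain ⟨d0, dX, dY⟩ := p_double hT hTY0
  have hsl : (3 * pX T ^ 2 + cA W) / (2 * pY T) = r + r₂ + r₃ := by
    rw [div_eq_iff (mul_ne_zero two_ne_zero hTY0), hTX, hTY, hA, hX]
    ring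
  rw [hsl] at dX dY
  have dX' : pX (T + T) = pX P := by rw [dX, hTX]; linear_combination -hs
  refine ⟨T, p_ext hP d0 dX'.symm ?_⟩
  rw [dY, dX', hTX, hTY, hrY]; ring

lemma add_half (h : Roots W e₁ e₂ e₃) {P Q : W.toAffine.Point} (hP : P ≠ 0) (hQ : Q ≠ 0)
    (hx : pX P ≠ pX Q) (hQe : pX Q - e₁ ≠ 0 ∧ pX Q - e₂ ≠ 0 ∧ pX Q - e₃ ≠ 0)
    (hPe : pX P - e₁ ≠ 0 ∧ pX P - e₂ ≠ 0 ∧ pX P - e₃ ≠ 0)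
    {z₁ z₂ z₃ : K} (h1 : pX P - e₁ = (pX Q - e₁) * z₁ ^ 2) (h2 : pX P - e₂ = (pX Q - e₂) * z₂ ^ 2)
    (h3 : pX P - e₃ = (pX Q - e₃) * z₃ ^ 2) : ∃ T : W.toAffine.Point, P + Q = T + T := by
  obtain ⟨s0, sX, -⟩ := p_add hP hQ hx
  have hd : pX P - pX Q ≠ 0 := sub_ne_zero.2 hx
  have eP := p_eqn hP
  have eQ := p_eqn hQ
  obtain ⟨l, hl⟩ : ∃ l, l = (pY P - pY Q) / (pX P - pX Q) := ⟨_, rfl⟩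
  rw [← hl] at sX
  have hl' : pY Q = pY P - l * (pX P - pX Q) := by rw [hl]; field_simp; ring
  -- key: for a root e
  have key : ∀ e z : K, e ^ 3 + cA W * e + cB W = 0 → pX Q - e ≠ 0 → pX P - e ≠ 0 →
      pX P - e = (pX Q - e) * z ^ 2 →
      ∃ r, pX (P + Q) - e = r ^ 2 := by
    intro e z he hqe hpe hz
    have hz0 : z ≠ 0 := by rintro rfl; exact hpe (by rw [hz]; ring)
    refine ⟨(l * (e - pX P) + pY P) / ((pX Q - e) * z), ?_⟩
    rw [div_pow, eq_div_iff (pow_ne_zero 2 (mul_ne_zero hqe hz0))]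
    have hk : (pX P - e) * (pX Q - e) * (pX (P + Q) - e) = (l * (e - pX P) + pY P) ^ 2 := by
      rw [hl'] at eQ
      rw [sX]
      have h5 : (pX P - pX Q) * ((pX P - e) * (pX Q - e) * (l ^ 2 - pX P - pX Q - e) - (l * (e - pX P) + pY P) ^ 2) = 0 := by
        linear_combination (pX Q - e) * eP - (pX P - e) * eQ - (pX P - pX Q) * he
      have := (mul_eq_zero.1 h5).resolve_left hd
      linear_combination this
    rw [← hk, hz]; ring
  have hs := h.sum
  have hroot : ∀ x, x ^ 3 + cA W * x + cB W = (x - e₁) * (x - e₂) * (x - e₃) := by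
    intro x
    rw [h.hA, h.hB]; linear_combination x ^ 2 * hs
  obtain ⟨r₁, k1⟩ := key e₁ z₁ (by rw [hroot]; ring) hQe.1 hPe.1 h1
  obtain ⟨r₂, k2⟩ := key e₂ z₂ (by rw [hroot]; ring) hQe.2.1 hPe.2.1 h2
  obtain ⟨r₃, k3⟩ := key e₃ z₃ (by rw [hroot]; ring) hQe.2.2 hPe.2.2 h3
  exact halving h s0 k1 k2 k3

end Weak
end APB

/-! ### The Mordell-Weil theorem -/

namespace APB

open scoped nonZeroDivisors NumberField TensorProduct
open IsDedekindDomain Height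

section MW

lemma even_val {K Γ : Type*} [Field K] [LinearOrderedCommGroupWithZero Γ] (v : Valuation K Γ) {a b c y : K}
    (ha : a ≠ 0) (hy : y ^ 2 = a * b * c) (hab : v (a - b) = 1) (hac : v (a - c) = 1) :
    IsSquare (v a) := by
  have hva : v a ≠ 0 := (Valuation.ne_zero_iff v).2 ha
  have hvy : v y ^ 2 = v a * v b * v c := by rw [← map_pow, hy, map_mul, map_mul]
  have eb : b = a - (a - b) := by ring
  have ec : c = a - (a - c) := by ring
  rcases lt_trichotomy (v a) 1 with h | h | h
  · have hb : v b = 1 := by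
      rw [eb, Valuation.map_sub_eq_of_lt_right v (by rw [hab]; exact h), hab]
    have hc : v c = 1 := by
      rw [ec, Valuation.map_sub_eq_of_lt_right v (by rw [hac]; exact h), hac]
    rw [hb, hc, mul_one, mul_one] at hvy
    exact ⟨v y, by rw [← hvy, sq]⟩
  · rw [h]; exact IsSquare.one
  · have hb : v b = v a := by
      conv_lhs => rw [eb, Valuation.map_sub_eq_of_lt_left v (by rw [hab]; exact h)]
    have hc : v c = v a := by
      conv_lhs => rw [ec, Valuation.map_sub_eq_of_lt_left v (by rw [hac]; exact h)]
    rw [hb, hc] at hvy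
    refine ⟨v y / v a, ?_⟩
    rw [div_mul_div_comm, ← sq, hvy]
    field_simp

variable {K : Type} [Field K] [NumberField K]

lemma exists_bad (x : K) (hx : x ≠ 0) : ∃ m : Ideal (𝓞 K), m ≠ 0 ∧
    ∀ p : HeightOneSpectrum (𝓞 K), ¬ p.asIdeal ∣ m → p.valuation K x = 1 := by
  obtain ⟨a, b, hb, rfl⟩ := IsFractionRing.div_surjective (A := 𝓞 K) x
  have hb0 : b ≠ 0 := nonZeroDivisors.ne_zero hb
  have ha0 : a ≠ 0 := by rintro rfl; simp at hx
  refine ⟨Ideal.span {a * b}, by simp [ha0, hb0], fun p hp => ?_⟩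
  rw [Ideal.dvd_span_singleton] at hp
  have h1 : a ∉ p.asIdeal := fun h => hp (Ideal.mul_mem_right _ _ h)
  have h2 : b ∉ p.asIdeal := fun h => hp (Ideal.mul_mem_left _ _ h)
  rw [map_div₀, (HeightOneSpectrum.valuation_eq_one_iff_notMem p).2 h1,
    (HeightOneSpectrum.valuation_eq_one_iff_notMem p).2 h2, div_one]

variable [DecidableEq K] {W : WeierstrassCurve K} [W.IsElliptic]

lemma weak_mw {e₁ e₂ e₃ : K} (h : Roots W e₁ e₂ e₃) :
    ∃ (ι : Type) (_ : Finite ι) (ψ : W.toAffine.Point → ι),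
      ∀ P Q, ψ P = ψ Q → ∃ T : W.toAffine.Point, P - Q = T + T := by
  obtain ⟨m1, hm1, k1⟩ := exists_bad (e₁ - e₂) (sub_ne_zero.2 h.n12)
  obtain ⟨m2, hm2, k2⟩ := exists_bad (e₁ - e₃) (sub_ne_zero.2 h.n13)
  obtain ⟨m3, hm3, k3⟩ := exists_bad (e₂ - e₃) (sub_ne_zero.2 h.n23)
  obtain ⟨ι, hι, g, hg⟩ := exists_class (K := K) (m1 * m2 * m3) (mul_ne_zero (mul_ne_zero hm1 hm2) hm3)
  have hroot : ∀ x, x ^ 3 + cA W * x + cB W = (x - e₁) * (x - e₂) * (x - e₃) := by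
    intro x
    rw [h.hA, h.hB]; linear_combination x ^ 2 * h.sum
  have K1 : ∀ p : HeightOneSpectrum (𝓞 K), ¬ p.asIdeal ∣ m1 * m2 * m3 → p.valuation K (e₁ - e₂) = 1 :=
    fun p hp => k1 p fun hd => hp ((hd.mul_right _).mul_right _)
  have K2 : ∀ p : HeightOneSpectrum (𝓞 K), ¬ p.asIdeal ∣ m1 * m2 * m3 → p.valuation K (e₁ - e₃) = 1 :=
    fun p hp => k2 p fun hd => hp ((hd.mul_left _).mul_right _)
  have K3 : ∀ p : HeightOneSpectrum (𝓞 K), ¬ p.asIdeal ∣ m1 * m2 * m3 → p.valuation K (e₂ - e₃) = 1 :=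
    fun p hp => k3 p fun hd => hp (hd.mul_left _)
  have ev : ∀ P : W.toAffine.Point, P ≠ 0 → pX P ≠ e₁ → pX P ≠ e₂ → pX P ≠ e₃ →
      EvenOut (m1 * m2 * m3) (pX P - e₁) ∧ EvenOut (m1 * m2 * m3) (pX P - e₂) ∧
      EvenOut (m1 * m2 * m3) (pX P - e₃) := by
    intro P hP n1 n2 n3
    have hy := p_eqn hP
    rw [hroot] at hy
    refine ⟨⟨sub_ne_zero.2 n1, fun p hp => ?_⟩, ⟨sub_ne_zero.2 n2, fun p hp => ?_⟩,
      ⟨sub_ne_zero.2 n3, fun p hp => ?_⟩⟩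
    · refine even_val (p.valuation K) (sub_ne_zero.2 n1) hy ?_ ?_
      · rw [sub_sub_sub_cancel_left, Valuation.map_sub_swap, K1 p hp]
      · rw [sub_sub_sub_cancel_left, Valuation.map_sub_swap, K2 p hp]
    · refine even_val (p.valuation K) (b := pX P - e₁) (c := pX P - e₃) (sub_ne_zero.2 n2)
        (by rw [hy]; ring) ?_ ?_
      · rw [sub_sub_sub_cancel_left, K1 p hp]
      · rw [sub_sub_sub_cancel_left, Valuation.map_sub_swap, K3 p hp]
    · refine even_val (p.valuation K) (b := pX P - e₁) (c := pX P - e₂) (sub_ne_zero.2 n3)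
        (by rw [hy]; ring) ?_ ?_
      · rw [sub_sub_sub_cancel_left, K2 p hp]
      · rw [sub_sub_sub_cancel_left, K3 p hp]
  refine ⟨(Prop × Prop × Prop × Prop) × (ι × ι × ι), inferInstance,
    fun P => ((P = 0, pX P = e₁, pX P = e₂, pX P = e₃),
      (g (pX P - e₁), g (pX P - e₂), g (pX P - e₃))), ?_⟩
  intro P Q hPQ
  simp only [Prod.mk.injEq, eq_iff_iff] at hPQ
  obtain ⟨⟨h0, hq1, hq2, hq3⟩, g1, g2, g3⟩ := hPQ
  by_cases hP : P = 0
  · exact ⟨0, by rw [hP, h0.1 hP]; simp⟩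
  have hQ : Q ≠ 0 := fun hh => hP (h0.2 hh)
  by_cases hx : pX P = pX Q
  · rcases p_ext_or hP hQ hx with rfl | rfl
    · exact ⟨0, by simp⟩
    · exact ⟨-Q, by abel⟩
  have n1 : pX P ≠ e₁ := fun hh => hx (by rw [hh, hq1.1 hh])
  have n2 : pX P ≠ e₂ := fun hh => hx (by rw [hh, hq2.1 hh])
  have n3 : pX P ≠ e₃ := fun hh => hx (by rw [hh, hq3.1 hh])
  have n1' : pX Q ≠ e₁ := fun hh => n1 (hq1.2 hh)
  have n2' : pX Q ≠ e₂ := fun hh => n2 (hq2.2 hh)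
  have n3' : pX Q ≠ e₃ := fun hh => n3 (hq3.2 hh)
  obtain ⟨a1, a2, a3⟩ := ev P hP n1 n2 n3
  obtain ⟨b1, b2, b3⟩ := ev Q hQ n1' n2' n3'
  obtain ⟨z1, hz1⟩ := hg _ _ a1 b1 g1
  obtain ⟨z2, hz2⟩ := hg _ _ a2 b2 g2
  obtain ⟨z3, hz3⟩ := hg _ _ a3 b3 g3
  obtain ⟨T, hT⟩ := add_half h hP hQ hx ⟨b1.1, b2.1, b3.1⟩ ⟨a1.1, a2.1, a3.1⟩ hz1 hz2 hz3
  refine ⟨T - Q, ?_⟩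
  rw [show P - Q = (P + Q) - Q - Q by abel, hT]; abel

lemma northcott_hp : Northcott (fun P : W.toAffine.Point => hp W.Δ P) := by
  refine ⟨fun c => ?_⟩
  by_contra hinf
  have hfin := NumberField.finite_setOfPred_logHeight₁_le K (6 * c)
  obtain ⟨t, ht, hc⟩ := Set.Infinite.exists_subset_card_eq hinf (12 * (show
    {z : K | logHeight₁ z ≤ 6 * c}.Finite from hfin).toFinset.card + 2)
  have := count (W := W) W.isUnit_Δ.ne_zero c hfin t (fun P hP => ht hP)
  omega

lemma mw_split {e₁ e₂ e₃ : K} (h : Roots W e₁ e₂ e₃) : AddGroup.FG W.toAffine.Point := by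
  obtain ⟨ι, hι, ψ, hψ⟩ := weak_mw h
  have := northcott_hp (W := W)
  refine AddCommGroup.fg_of_descent' (h := fun P : W.toAffine.Point => hp W.Δ P) ?_
    (fun P => hp_nonneg _ P) (hp_par (LD_of W))
  have : Finite (W.toAffine.Point ⧸ (nsmulAddMonoidHom (α := W.toAffine.Point) 2).range) := by
    refine Finite.of_injective (fun q => ψ (Quotient.out q)) fun a b hab => ?_
    obtain ⟨T, hT⟩ := hψ _ _ hab
    rw [← Quotient.out_eq a, ← Quotient.out_eq b]
    refine (QuotientAddGroup.eq).2 ⟨-T, ?_⟩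
    simp only [nsmulAddMonoidHom_apply, two_nsmul]
    rw [show -(Quotient.out a) + Quotient.out b = -(Quotient.out a - Quotient.out b) by abel, hT]
    abel
  exact AddSubgroup.finiteIndex_of_finite_quotient

end MW

lemma mw_fg (W : WeierstrassCurve ℚ) [W.IsElliptic] : AddGroup.FG W.toAffine.Point := by
  classical
  let C : Cubic ℚ := ⟨1, 0, cA W, cB W⟩
  let K := C.toPoly.SplittingField
  have hC : (C.toPoly.map (algebraMap ℚ K)).Splits := Polynomial.SplittingField.splits _
  have : FiniteDimensional ℚ K := inferInstance
  have : CharZero K := algebraRat.charZero K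
  have : NumberField K := ⟨⟩
  have ha : C.a ≠ 0 := one_ne_zero
  obtain ⟨e₁, e₂, e₃, h3⟩ := (Cubic.splits_iff_roots_eq_three (φ := algebraMap ℚ K) ha).1 hC
  have hb := Cubic.b_eq_three_roots ha h3
  have hc := Cubic.c_eq_three_roots ha h3
  have hd := Cubic.d_eq_three_roots ha h3
  have hdisc : C.discr ≠ 0 := by
    have h1 := disc_eq W
    have h2 := W.isUnit_Δ.ne_zero
    intro h0
    apply h2
    rw [h1]
    simp only [Cubic.discr, C] at h0
    linear_combination 16 * h0
  obtain ⟨n12, n13, n23⟩ := (Cubic.discr_ne_zero_iff_roots_ne ha h3).1 hdisc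
  simp only [C, map_one, one_mul, map_zero] at hb hc hd
  let W' : WeierstrassCurve K := W.map (algebraMap ℚ K)
  have hR : Roots W' e₁ e₂ e₃ := by
    refine ⟨?_, ?_, ?_, n12, n13, n23⟩
    · linear_combination hb
    · rw [← hc]; simp [W', cA]
    · rw [← neg_eq_iff_eq_neg] at hd
      simp [W', cB] at hd ⊢
      linear_combination -hd
  have : AddGroup.FG W'.toAffine.Point := mw_split hR
  have key : ∀ V : WeierstrassCurve ℚ, V = W.map (algebraMap ℚ ℚ) → AddGroup.FG V.toAffine.Point := by
    rintro _ rfl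
    have hfin : Module.Finite ℤ W'.toAffine.Point := Module.Finite.iff_addGroup_fg.2 this
    have hinj := WeierstrassCurve.Affine.Point.map_injective (W' := W) (Algebra.ofId ℚ K)
    refine Module.Finite.iff_addGroup_fg.1 ?_
    have hnoe : IsNoetherian ℤ W'.toAffine.Point := isNoetherian_of_isNoetherianRing_of_finite _ _
    have hnoe' : IsNoetherian ℤ (WeierstrassCurve.Affine.baseChange W K).Point := hnoe
    exact Module.Finite.of_injective
      (WeierstrassCurve.Affine.Point.map (W' := W) (Algebra.ofId ℚ K)).toIntLinearMap hinj
  exact key W (by rw [show algebraMap ℚ ℚ = RingHom.id ℚ from rfl, WeierstrassCurve.map_id])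

lemma mw (W : WeierstrassCurve ℚ) [W.IsElliptic] : FiniteDimensional ℚ (ℚ ⊗[ℤ] W.toAffine.Point) := by
  have := mw_fg W
  have : Module.Finite ℤ W.toAffine.Point := Module.Finite.iff_addGroup_fg.2 this
  infer_instance

end APB

namespace APB
open Height Real
open scoped TensorProduct

section Fin

lemma final (hmw : ∀ (W : WeierstrassCurve ℚ) [W.IsElliptic], FiniteDimensional ℚ (ℚ ⊗[ℤ] W.toAffine.Point))
    (j₀ : ℚ) (R : ℕ)
    (hR : ∀ (W : WeierstrassCurve ℚ) [W.IsElliptic], W.j = j₀ → grpRank W.toAffine.Point ≤ R) :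
    ∃ N₀ : ℕ, ∀ (W : WeierstrassCurve ℚ) [W.IsElliptic], W.j = j₀ →
      ∀ (N : ℕ) (x y : Fin N → ℚ), (∀ i, W.toAffine.Nonsingular (x i) (y i)) →
        (IsNontrivAP x ∨ IsNontrivAP y) → N ≤ N₀ := by
  obtain ⟨N₀, hN₀⟩ := main_bound (K := ℚ) (fun c => NumberField.finite_setOfPred_logHeight₁_le ℚ c)
    (max (gsl (sJ j₀)) 0) (le_max_right _ _) R
  refine ⟨N₀, fun W _ hj N x y hns hap => ?_⟩
  have hLD := LD_of W
  rw [hj] at hLD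
  have hmain := hN₀ W W.Δ (sJ j₀) hLD (le_max_left _ _) (hmw W) (hR W hj)
  let pt : Fin N → W.toAffine.Point := fun i => .some _ _ (hns i)
  obtain ⟨u, v, w, hlab⟩ : ∃ u v w : ℚ, ∀ i, lab u v w (pt i) = (((i : ℕ) + 1 : ℕ) : ℚ) := by
    rcases hap with ⟨a, b, hb, hab⟩ | ⟨a, b, hb, hab⟩
    · refine ⟨0, 1 / b, -(a + W.b₂ / 12) / b, fun i => ?_⟩
      have : pX (pt i) = x i + W.b₂ / 12 := rfl
      rw [lab, this, hab i]
      field_simp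
      ring
    · refine ⟨1 / b, -W.a₁ / (2 * b), (W.a₁ * W.b₂ / 24 - W.a₃ / 2 - a) / b, fun i => ?_⟩
      have h1 : pX (pt i) = x i + W.b₂ / 12 := rfl
      have h2 : pY (pt i) = y i + (W.a₁ * x i + W.a₃) / 2 := rfl
      rw [lab, h1, h2, hab i]
      field_simp
      ring
  have hinj : Function.Injective pt := by
    intro i i' h
    have h1 := hlab i
    rw [h, hlab i'] at h1
    have := Nat.cast_injective h1
    ext; omega
  classical
  have hcard : (Finset.univ.image pt).card = N := by
    rw [Finset.card_image_of_injective _ hinj, Finset.card_univ, Fintype.card_fin]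
  have := hmain (Finset.univ.image pt) u v w ?_ ?_ ?_
  · rwa [hcard] at this
  · simp only [Finset.mem_image, Finset.mem_univ, true_and, forall_exists_index, forall_apply_eq_imp_iff]
    intro i
    exact WeierstrassCurve.Affine.Point.some_ne_zero _
  · simp only [Finset.mem_image, Finset.mem_univ, true_and, forall_exists_index, forall_apply_eq_imp_iff]
    intro i i' h
    rw [hlab, hlab] at h
    have := Nat.cast_injective h
    congr 1
    ext; omega
  · rw [hcard]
    simp only [Finset.mem_image, Finset.mem_univ, true_and, forall_exists_index, forall_apply_eq_imp_iff]
    intro i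
    rw [hlab, Rat.logHeight₁_natCast]
    exact log_le_log (by positivity) (by exact_mod_cast i.2)

end Fin
end APB

/-- If the ranks of elliptic curves over `ℚ` with `j`-invariant `j₀` are uniformly bounded,
then there is `N₀ = N₀(j₀)` bounding the length of every non-trivial arithmetic progression
in the `x`-coordinates (or `y`-coordinates) of rational points of any elliptic curve over `ℚ`
with `j`-invariant `j₀`. -/
theorem AP_bounded_of_rank_bounded (j₀ : ℚ)
    (R : ℕ)
    (hR : ∀ (W : WeierstrassCurve ℚ) [W.IsElliptic], W.j = j₀ →
      grpRank W.toAffine.Point ≤ R) :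
    ∃ N₀ : ℕ, ∀ (W : WeierstrassCurve ℚ) [W.IsElliptic], W.j = j₀ →
      ∀ (N : ℕ) (x y : Fin N → ℚ),
        (∀ i, W.toAffine.Nonsingular (x i) (y i)) →
        (IsNontrivAP x ∨ IsNontrivAP y) →
        N ≤ N₀ := by
  exact APB.final (fun W _ => APB.mw W) j₀ R hR
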